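/- arXiv:1602.05940 — 5 statements merged into one kernel-verified Lean document; each statement's English description precedes it below -/
import Mathlib

section
/- For every OCA A over a nonempty finite alphabet Σ there exists a deterministic OCA A' over Σ such that L_obs(A') = L_obs(A) and L_vis(A') ⊆ Enc_Σ. -/
/-! Common framework: one-counter automata (OCAs) over a finite alphabet,
with the classical (`oca`), visibly (`vis`) and observability (`obs`) semantics. -/

/-- Letters from an alphabet `α` together with the two counter operations
`inc` and `dec`. -/
inductive Vis (α : Type*) : Type _ where
  | sym : α → Vis α
  | inc : Vis α
  | dec : Vis α

/-- A one-counter automaton (an `m`-OCA) over alphabet `α` with state set `Q`: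
an initial state, a set of final states, a threshold `m`, and a transition
relation `Δ ⊆ Q × {0,…,m} × (α ∪ {inc,dec}) × Q`. -/
structure OCA (Q : Type*) (α : Type*) where
  init : Q
  final : Set Q
  m : ℕ
  Δ : Set (Q × ℕ × Vis α × Q)
  valid : ∀ t ∈ Δ, t.2.1 ≤ m

variable {Q α : Type*}

/-- One step of an OCA, labeled by an element of `(α × ℕ) ∪ {inc, dec}`. -/
def OCA.step (A : OCA Q α) : Q × ℕ → Vis (α × ℕ) → Q × ℕ → Prop
  | (q, x), Vis.inc, (q', x') => x' = x + 1 ∧ (q, min x A.m, Vis.inc, q') ∈ A.Δ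
  | (q, x), Vis.dec, (q', x') => 1 ≤ x ∧ x' = x - 1 ∧ (q, min x A.m, Vis.dec, q') ∈ A.Δ
  | (q, x), Vis.sym (a, y), (q', x') => y = x ∧ x' = x ∧ (q, min x A.m, Vis.sym a, q') ∈ A.Δ

/-- `A.RunFrom c ts cs` holds if there is a partial run of `A` starting in
configuration `c`, with trace `ts`, visiting exactly the configurations
listed in `cs` (starting with `c`). -/
inductive OCA.RunFrom (A : OCA Q α) : Q × ℕ → List (Vis (α × ℕ)) → List (Q × ℕ) → Prop
  | nil (c : Q × ℕ) : OCA.RunFrom A c [] [c]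
  | cons {c c' : Q × ℕ} {τ : Vis (α × ℕ)} {ts : List (Vis (α × ℕ))} {cs : List (Q × ℕ)} :
      A.step c τ c' → OCA.RunFrom A c' ts cs → OCA.RunFrom A c (τ :: ts) (c :: cs)

/-- `ts` is the trace of some accepting run of `A` (a run starting in the
initial configuration `(ι,0)` whose last configuration has a final state). -/
def OCA.AccTrace (A : OCA Q α) (ts : List (Vis (α × ℕ))) : Prop :=
  ∃ cs c, A.RunFrom (A.init, 0) ts cs ∧ cs.getLast? = some c ∧ c.1 ∈ A.final

/-- Projection of a trace letter used for the visibly semantics: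
`(a,x)` becomes `a`, and `inc`/`dec` are kept. -/
def visOf : Vis (α × ℕ) → Vis α
  | Vis.sym (a, _) => Vis.sym a
  | Vis.inc => Vis.inc
  | Vis.dec => Vis.dec

/-- The visibly projection of a trace. -/
def visMap (ts : List (Vis (α × ℕ))) : List (Vis α) := ts.map visOf

/-- The observability projection of a trace: keep the pairs `(a,x)`,
erase `inc`/`dec`. -/
def obsMap (ts : List (Vis (α × ℕ))) : List (α × ℕ) :=
  ts.filterMap fun τ => match τ with
    | Vis.sym p => some p
    | _ => none

/-- The classical projection of a trace: `(a,x)` becomes `a`,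
`inc`/`dec` are erased. -/
def ocaMap (ts : List (Vis (α × ℕ))) : List α :=
  ts.filterMap fun τ => match τ with
    | Vis.sym (a, _) => some a
    | _ => none

/-- The visibly semantics `L_vis(A)`. -/
def OCA.Lvis (A : OCA Q α) : Set (List (Vis α)) :=
  {w | ∃ ts, A.AccTrace ts ∧ visMap ts = w}

/-- The observability semantics `L_obs(A)`. -/
def OCA.Lobs (A : OCA Q α) : Set (List (α × ℕ)) :=
  {w | ∃ ts, A.AccTrace ts ∧ obsMap ts = w}

/-- The classical semantics `L_oca(A)`. -/
def OCA.Loca (A : OCA Q α) : Set (List α) :=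
  {w | ∃ ts, A.AccTrace ts ∧ ocaMap ts = w}

/-- An OCA is deterministic if for every state `q`, counter test `k ≤ m` and
letter `σ ∈ α ∪ {inc,dec}` there is exactly one target state. -/
def OCA.Deterministic (A : OCA Q α) : Prop :=
  ∀ (q : Q) (k : ℕ) (σ : Vis α), k ≤ A.m → ∃! q' : Q, (q, k, σ, q') ∈ A.Δ

/-- Test for the letter `inc`. -/
def isIncB : Vis α → Bool
  | Vis.inc => true
  | _ => false

/-- Test for the letter `dec`. -/
def isDecB : Vis α → Bool
  | Vis.dec => true
  | _ => false

/-- Well-formed words over `α ∪ {inc,dec}`: no prefix contains more `dec`'s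
than `inc`'s. -/
def WFWords (α : Type*) : Set (List (Vis α)) :=
  {w | ∀ p, p <+: w → p.countP isDecB ≤ p.countP isIncB}

/-- `encFrom x0 w` encodes `w ∈ (α × ℕ)*` starting from previous counter
value `x0`: each `(a,x)` becomes `inc^(x-x0) a` (if `x ≥ x0`) or
`dec^(x0-x) a` (otherwise). -/
def encFrom : ℕ → List (α × ℕ) → List (Vis α)
  | _, [] => []
  | x0, (a, x) :: w =>
      (if x0 ≤ x then List.replicate (x - x0) Vis.inc
       else List.replicate (x0 - x) Vis.dec) ++ Vis.sym a :: encFrom x w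

/-- The encoding `enc : (α × ℕ)* → (α ∪ {inc,dec})*`. -/
def enc (w : List (α × ℕ)) : List (Vis α) := encFrom 0 w

/-- The set `Enc_α` of valid encodings. -/
def EncSet (α : Type*) : Set (List (Vis α)) := Set.range (enc (α := α))

/-- A set `S ⊆ ℕ` is ultimately periodic if there are `t` and `d ≥ 1` such
that for all `x ≥ t`, `x ∈ S ↔ x + d ∈ S`. -/
def UltPeriodic (S : Set ℕ) : Prop :=
  ∃ t d : ℕ, 1 ≤ d ∧ ∀ x : ℕ, t ≤ x → (x ∈ S ↔ x + d ∈ S)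

/-- An extended OCA (eOCA): transitions are guarded by ultimately periodic
sets of counter values, and acceptance is given by an ultimately periodic set
of counter values for each state. -/
structure EOCA (Q : Type*) (α : Type*) where
  init : Q
  f : Q → Set ℕ
  hf : ∀ q, UltPeriodic (f q)
  Δ : Set (Q × Set ℕ × Vis α × Q)
  hΔfin : Δ.Finite
  hΔup : ∀ t ∈ Δ, UltPeriodic t.2.1

/-- One step of an eOCA. -/
def EOCA.step (A : EOCA Q α) : Q × ℕ → Vis (α × ℕ) → Q × ℕ → Prop
  | (q, x), Vis.inc, (q', x') =>
      x' = x + 1 ∧ ∃ S, (q, S, Vis.inc, q') ∈ A.Δ ∧ x ∈ S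
  | (q, x), Vis.dec, (q', x') =>
      1 ≤ x ∧ x' = x - 1 ∧ ∃ S, (q, S, Vis.dec, q') ∈ A.Δ ∧ x ∈ S
  | (q, x), Vis.sym (a, y), (q', x') =>
      y = x ∧ x' = x ∧ ∃ S, (q, S, Vis.sym a, q') ∈ A.Δ ∧ x ∈ S

/-- Partial runs of an eOCA, as for OCAs. -/
inductive EOCA.RunFrom (A : EOCA Q α) : Q × ℕ → List (Vis (α × ℕ)) → List (Q × ℕ) → Prop
  | nil (c : Q × ℕ) : EOCA.RunFrom A c [] [c]
  | cons {c c' : Q × ℕ} {τ : Vis (α × ℕ)} {ts : List (Vis (α × ℕ))} {cs : List (Q × ℕ)} :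
      A.step c τ c' → EOCA.RunFrom A c' ts cs → EOCA.RunFrom A c (τ :: ts) (c :: cs)

/-- Accepting traces of an eOCA: the last configuration `(q,x)` satisfies
`x ∈ f q`. -/
def EOCA.AccTrace (A : EOCA Q α) (ts : List (Vis (α × ℕ))) : Prop :=
  ∃ cs c, A.RunFrom (A.init, 0) ts cs ∧ cs.getLast? = some c ∧ c.2 ∈ A.f c.1

/-- The visibly semantics of an eOCA. -/
def EOCA.Lvis (A : EOCA Q α) : Set (List (Vis α)) :=
  {w | ∃ ts, A.AccTrace ts ∧ visMap ts = w}

/-- The observability semantics of an eOCA. -/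
def EOCA.Lobs (A : EOCA Q α) : Set (List (α × ℕ)) :=
  {w | ∃ ts, A.AccTrace ts ∧ obsMap ts = w}

/-- The classical semantics of an eOCA. -/
def EOCA.Loca (A : EOCA Q α) : Set (List α) :=
  {w | ∃ ts, A.AccTrace ts ∧ ocaMap ts = w}

namespace S14

def AccFrom (A : OCA Q α) (c : Q × ℕ) (ts : List (Vis (α × ℕ))) : Prop :=
  ∃ cs c', A.RunFrom c ts cs ∧ cs.getLast? = some c' ∧ c'.1 ∈ A.final

theorem accFrom_nil (A : OCA Q α) (c : Q × ℕ) : AccFrom A c [] ↔ c.1 ∈ A.final := by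
  constructor
  · rintro ⟨cs, c', h, hl, hf⟩
    cases h
    simp at hl
    subst hl; exact hf
  · intro h
    exact ⟨[c], c, .nil c, by simp, h⟩

theorem run_ne_nil {A : OCA Q α} {c : Q × ℕ} {ts cs} (h : A.RunFrom c ts cs) : cs ≠ [] := by
  cases h <;> simp

theorem accFrom_cons (A : OCA Q α) (c : Q × ℕ) (τ ts) :
    AccFrom A c (τ :: ts) ↔ ∃ c', A.step c τ c' ∧ AccFrom A c' ts := by
  constructor
  · rintro ⟨cs, c', h, hl, hf⟩
    cases h with
    | cons hs hr =>
      rename_i c1 cs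
      have := run_ne_nil hr
      obtain ⟨d, ds, rfl⟩ := List.exists_cons_of_ne_nil this
      exact ⟨c1, hs, _, c', hr, by simpa [List.getLast?_cons_cons] using hl, hf⟩
  · rintro ⟨c1, hs, cs, c', hr, hl, hf⟩
    have := run_ne_nil hr
    obtain ⟨d, ds, rfl⟩ := List.exists_cons_of_ne_nil this
    exact ⟨_, c', .cons hs hr, by simpa [List.getLast?_cons_cons] using hl, hf⟩

def est (A : OCA Q α) (c c' : Q × ℕ) : Prop := A.step c .inc c' ∨ A.step c .dec c'

abbrev rch (A : OCA Q α) (P : ℕ → Prop) : Q × ℕ → Q × ℕ → Prop :=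
  Relation.ReflTransGen (fun c c' => est A c c' ∧ P c'.2)

abbrev er (A : OCA Q α) : Q × ℕ → Q × ℕ → Prop := rch A (fun _ => True)

theorem est_inc {A : OCA Q α} {q x p} (h : (q, min x A.m, Vis.inc, p) ∈ A.Δ) :
    est A (q, x) (p, x+1) := Or.inl ⟨rfl, h⟩

theorem est_dec {A : OCA Q α} {q x p} (h : (q, min (x+1) A.m, Vis.dec, p) ∈ A.Δ) :
    est A (q, x+1) (p, x) := Or.inr ⟨by omega, by omega, h⟩

theorem est_cases {A : OCA Q α} {q x p y} (h : est A (q, x) (p, y)) :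
    (y = x + 1 ∧ (q, min x A.m, Vis.inc, p) ∈ A.Δ) ∨
    (x = y + 1 ∧ (q, min x A.m, Vis.dec, p) ∈ A.Δ) := by
  rcases h with h | h
  · exact Or.inl ⟨h.1, h.2⟩
  · obtain ⟨h1, h2, h3⟩ := h
    exact Or.inr ⟨by omega, h3⟩

theorem rch_mono {A : OCA Q α} {P P' : ℕ → Prop} (h : ∀ k, P k → P' k) {c c'}
    (hr : rch A P c c') : rch A P' c c' :=
  Relation.ReflTransGen.mono (fun _ _ hh => ⟨hh.1, h _ hh.2⟩) _ _ hr

theorem sim {A : OCA Q α} {x y : ℕ} (hx : A.m ≤ x) (hy : A.m ≤ y)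
    (hB : ∀ p q, rch A (· ≤ x) (p, x) (q, x) → rch A (· ≤ y) (p, y) (q, y))
    {P P' : ℕ → Prop} (h1 : ∀ k, P (x+k) → P' (y+k)) (h2 : ∀ k, k ≤ y → P' k)
    {p : Q} {j : ℕ} {c : Q × ℕ} (h : rch A P (p, x+j) c) :
    (∃ k, c.2 = x + k ∧ rch A P' (p, y+j) (c.1, y+k)) ∨
    (c.2 ≤ x ∧ ∃ r, rch A P' (p, y+j) (r, y) ∧ rch A (· ≤ x) (r, x) c) := by
  induction h with
  | refl => exact Or.inl ⟨j, rfl, .refl⟩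
  | @tail b c hb hs ih =>
    obtain ⟨b, z⟩ := b
    obtain ⟨c, w⟩ := c
    obtain ⟨hs, hP⟩ := hs
    have hP : P w := hP
    have key : (∃ k, z = x + k ∧ rch A P' (p, y+j) (b, y+k)) ∨
        (z < x ∧ ∃ r, rch A P' (p, y+j) (r, y) ∧ rch A (· ≤ x) (r, x) (b, z)) := by
      rcases ih with ih | ⟨hz, r, hr, hr'⟩
      · exact Or.inl ih
      · have hz : z ≤ x := hz
        rcases hz.lt_or_eq with hz | rfl
        · exact Or.inr ⟨hz, r, hr, hr'⟩
        · exact Or.inl ⟨0, rfl, hr.trans (rch_mono h2 (hB _ _ hr'))⟩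
    rcases key with ⟨k, rfl, hk⟩ | ⟨hz, r, hr, hr'⟩
    · rcases est_cases hs with ⟨rfl, hd⟩ | ⟨he, hd⟩
      · refine Or.inl ⟨k+1, rfl, hk.tail ⟨?_, h1 (k+1) hP⟩⟩
        apply est_inc
        rwa [show min (y+k) A.m = min (x+k) A.m by omega]
      · rcases k with _ | k
        · refine Or.inr ⟨by show w ≤ x; omega, b, hk, .single ⟨hs, by show w ≤ x; omega⟩⟩
        · obtain rfl : w = x + k := by omega
          refine Or.inl ⟨k, rfl, hk.tail ⟨?_, h1 k hP⟩⟩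
          have e : min (y+k+1) A.m = min (x+(k+1)) A.m := by omega
          exact est_dec (x := y + k) (by rw [e]; exact hd)
    · have : w ≤ x := by
        rcases est_cases hs with ⟨rfl, hd⟩ | ⟨he, hd⟩ <;> omega
      exact Or.inr ⟨this, r, hr, hr'.tail ⟨hs, this⟩⟩

/-- summaries -/
def Sm (A : OCA Q α) (x : ℕ) : Set (Q × Q) × Set Q :=
  ({pq | rch A (· ≤ x) (pq.1, x) (pq.2, x)},
   {p | ∃ c, rch A (· ≤ x) (p, x) c ∧ c.1 ∈ A.final})

theorem Sm_B {A : OCA Q α} {x y} (h : Sm A x = Sm A y) (p q)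
    (hr : rch A (· ≤ x) (p, x) (q, x)) : rch A (· ≤ y) (p, y) (q, y) := by
  have := congrArg Prod.fst h
  have h' : (p, q) ∈ (Sm A x).1 := hr
  rw [this] at h'; exact h'

theorem Sm_E {A : OCA Q α} {x y} (h : Sm A x = Sm A y) (p)
    (hr : ∃ c, rch A (· ≤ x) (p, x) c ∧ c.1 ∈ A.final) :
    ∃ c, rch A (· ≤ y) (p, y) c ∧ c.1 ∈ A.final := by
  have := congrArg Prod.snd h
  have h' : p ∈ (Sm A x).2 := hr
  rw [this] at h'; exact h'

theorem simF {A : OCA Q α} {x y : ℕ} (hx : A.m ≤ x) (hy : A.m ≤ y) (h : Sm A x = Sm A y)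
    {P P' : ℕ → Prop} (h1 : ∀ k, P (x+k) → P' (y+k)) (h2 : ∀ k, k ≤ y → P' k)
    {p q : Q} {j : ℕ} (hr : rch A P (p, x+j) (q, x+j)) : rch A P' (p, y+j) (q, y+j) := by
  rcases sim hx hy (Sm_B h) h1 h2 hr with ⟨k, hk, hh⟩ | ⟨hz, r, hr1, hr2⟩
  · obtain rfl : j = k := by simpa using hk
    exact hh
  · obtain rfl : j = 0 := by simpa using hz
    exact hr1.trans (rch_mono h2 (Sm_B h _ _ hr2))

theorem simE {A : OCA Q α} {x y : ℕ} (hx : A.m ≤ x) (hy : A.m ≤ y) (h : Sm A x = Sm A y)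
    {P P' : ℕ → Prop} (h1 : ∀ k, P (x+k) → P' (y+k)) (h2 : ∀ k, k ≤ y → P' k)
    {p : Q} {j : ℕ} (hr : ∃ c, rch A P (p, x+j) c ∧ c.1 ∈ A.final) :
    ∃ c, rch A P' (p, y+j) c ∧ c.1 ∈ A.final := by
  obtain ⟨c, hr, hf⟩ := hr
  rcases sim hx hy (Sm_B h) h1 h2 hr with ⟨k, hk, hh⟩ | ⟨hz, r, hr1, hr2⟩
  · exact ⟨_, hh, hf⟩
  · obtain ⟨c', h3, h4⟩ := Sm_E h r ⟨c, hr2, hf⟩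
    exact ⟨c', hr1.trans (rch_mono h2 h3), h4⟩

theorem Sm_succ {A : OCA Q α} {x y : ℕ} (hx : A.m ≤ x) (hy : A.m ≤ y) (h : Sm A x = Sm A y) :
    Sm A (x+1) = Sm A (y+1) := by
  refine Prod.ext (Set.ext fun pq => ?_) (Set.ext fun p => ?_)
  · exact ⟨fun hh => simF (j := 1) (P := (· ≤ x+1)) (P' := (· ≤ y+1)) hx hy h 
        (fun k (hk : _ + k ≤ _ + 1) => by show _ + k ≤ _ + 1; omega) (fun k hk => by show k ≤ _ + 1; omega) hh,
      fun hh => simF (j := 1) (P := (· ≤ y+1)) (P' := (· ≤ x+1)) hy hx h.symm 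
        (fun k (hk : _ + k ≤ _ + 1) => by show _ + k ≤ _ + 1; omega) (fun k hk => by show k ≤ _ + 1; omega) hh⟩
  · exact ⟨fun hh => simE (j := 1) (P := (· ≤ x+1)) (P' := (· ≤ y+1)) hx hy h 
        (fun k (hk : _ + k ≤ _ + 1) => by show _ + k ≤ _ + 1; omega) (fun k hk => by show k ≤ _ + 1; omega) hh,
      fun hh => simE (j := 1) (P := (· ≤ y+1)) (P' := (· ≤ x+1)) hy hx h.symm 
        (fun k (hk : _ + k ≤ _ + 1) => by show _ + k ≤ _ + 1; omega) (fun k hk => by show k ≤ _ + 1; omega) hh⟩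

theorem Sm_periodic [Finite Q] (A : OCA Q α) :
    ∃ t d : ℕ, A.m ≤ t ∧ 0 < d ∧ ∀ x, t ≤ x → Sm A x = Sm A (x + d) := by
  obtain ⟨i, j, hij, he⟩ := Finite.exists_ne_map_eq_of_infinite (fun i => Sm A (A.m + i))
  wlog hlt : i < j generalizing i j
  · exact this j i hij.symm he.symm (by omega)
  refine ⟨A.m + i, j - i, by omega, by omega, fun x hx => ?_⟩
  induction x, hx using Nat.le_induction with
  | base => rw [show A.m + i + (j - i) = A.m + j by omega]; exact he
  | succ x hx ih =>
    rw [show x + 1 + (j - i) = x + (j - i) + 1 by omega]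
    exact Sm_succ (by omega) (by omega) ih

def Efin (A : OCA Q α) (x : ℕ) (q : Q) : Prop := ∃ c, er A (q, x) c ∧ c.1 ∈ A.final

def Good (A : OCA Q α) (t d : ℕ) : Prop := A.m ≤ t ∧ ∀ x y : ℕ, t ≤ x → t ≤ y →
  (x : ZMod d) = (y : ZMod d) →
  (∀ p q, er A (p, x) (q, x) ↔ er A (p, y) (q, y)) ∧ ∀ p, Efin A x p ↔ Efin A y p

theorem exists_good [Finite Q] (A : OCA Q α) : ∃ t d, 0 < d ∧ Good A t d := by
  obtain ⟨t, d, ht, hd, h⟩ := Sm_periodic A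
  refine ⟨t, d, hd, ht, fun x y hx hy hxy => ?_⟩
  have hS : Sm A x = Sm A y := by
    wlog hle : x ≤ y generalizing x y
    · exact (this y x hy hx hxy.symm (by omega)).symm
    rw [ZMod.natCast_eq_natCast_iff] at hxy
    obtain ⟨k, hk⟩ := (Nat.modEq_iff_dvd' hle).1 hxy
    obtain rfl : y = x + d * k := by omega
    clear hk hxy hy hle
    induction k with
    | zero => simp
    | succ k ih =>
      rw [ih, h _ (by omega)]; congr 1; ring
  have hx' : A.m ≤ x := by omega
  have hy' : A.m ≤ y := by omega
  refine ⟨fun p q => ⟨fun hh => ?_, fun hh => ?_⟩, fun p => ⟨fun hh => ?_, fun hh => ?_⟩⟩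
  · exact simF (j := 0) hx' hy' hS (by simp) (by simp) hh
  · exact simF (j := 0) hy' hx' hS.symm (by simp) (by simp) hh
  · exact simE (j := 0) hx' hy' hS (by simp) (by simp) hh
  · exact simE (j := 0) hy' hx' hS.symm (by simp) (by simp) hh

/-! acceptance of observation words -/

def acc (A : OCA Q α) : Q × ℕ → List (α × ℕ) → Prop
  | c, [] => ∃ c', er A c c' ∧ c'.1 ∈ A.final
  | c, (a, x) :: w => ∃ q q', er A c (q, x) ∧ (q, min x A.m, Vis.sym a, q') ∈ A.Δ ∧ acc A (q', x) w

theorem acc_er {A : OCA Q α} {c c' w} (h : er A c c') (h' : acc A c' w) : acc A c w := by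
  rcases w with _ | ⟨⟨a, x⟩, w⟩
  · obtain ⟨c1, h1, h2⟩ := h'
    exact ⟨c1, h.trans h1, h2⟩
  · obtain ⟨q, q', h1, h2⟩ := h'
    exact ⟨q, q', h.trans h1, h2⟩

theorem acc_of {A : OCA Q α} (ts) : ∀ {c}, AccFrom A c ts → acc A c (obsMap ts) := by
  induction ts with
  | nil =>
    intro c h
    rw [accFrom_nil] at h
    exact ⟨c, .refl, h⟩
  | cons τ ts ih =>
    intro c h
    rw [accFrom_cons] at h
    obtain ⟨c', hs, h⟩ := h
    have h := ih h
    rcases τ with ⟨a, y⟩ | _ | _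
    · obtain ⟨q, x⟩ := c
      obtain ⟨q', x'⟩ := c'
      obtain ⟨rfl, rfl, hs⟩ := hs
      exact ⟨q, q', .refl, hs, h⟩
    · exact acc_er (.single ⟨Or.inl hs, trivial⟩) h
    · exact acc_er (.single ⟨Or.inr hs, trivial⟩) h

theorem accFrom_er {A : OCA Q α} {c c' ts} (h : er A c c') (h' : AccFrom A c' ts) :
    ∃ ts', AccFrom A c ts' ∧ obsMap ts' = obsMap ts := by
  induction h using Relation.ReflTransGen.head_induction_on with
  | refl => exact ⟨ts, h', rfl⟩
  | head hs _ ih =>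
    obtain ⟨ts', h1, h2⟩ := ih
    rcases hs.1 with hs | hs
    · exact ⟨.inc :: ts', (accFrom_cons ..).2 ⟨_, hs, h1⟩, h2⟩
    · exact ⟨.dec :: ts', (accFrom_cons ..).2 ⟨_, hs, h1⟩, h2⟩

theorem of_acc {A : OCA Q α} (w) : ∀ {c}, acc A c w → ∃ ts, AccFrom A c ts ∧ obsMap ts = w := by
  induction w with
  | nil =>
    rintro c ⟨c', h, hf⟩
    exact accFrom_er h ((accFrom_nil ..).2 hf)
  | cons p w ih =>
    obtain ⟨a, x⟩ := p
    rintro c ⟨q, q', h, hd, h'⟩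
    obtain ⟨ts, h1, h2⟩ := ih h'
    obtain ⟨ts', h3, h4⟩ := accFrom_er (ts := .sym (a, x) :: ts) h
      ((accFrom_cons ..).2 ⟨(q', x), ⟨rfl, rfl, hd⟩, h1⟩)
    exact ⟨ts', h3, h4.trans (by rw [← h2]; rfl)⟩

theorem mem_Lobs {A : OCA Q α} {w} : w ∈ A.Lobs ↔ acc A (A.init, 0) w :=
  ⟨fun ⟨ts, h, hw⟩ => hw ▸ acc_of ts h, fun h => of_acc w h⟩

/-! the deterministic automaton -/

def tgt (x : ℕ) : Vis α → ℕ
  | .inc => x + 1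
  | .dec => x - 1
  | .sym _ => x

def dl (d : ℕ) : Vis α → ZMod d
  | .inc => 1
  | .dec => -1
  | .sym _ => 0

/-- modes: 0 neutral, 1 up, 2 down, 3 sink -/
def md : Vis α → Fin 4 → Fin 4
  | .inc, i => if i = 0 ∨ i = 1 then 1 else 3
  | .dec, i => if i = 0 ∨ i = 2 then 2 else 3
  | .sym _, i => if i = 3 then 3 else 0

def dT (A : OCA Q α) (x : ℕ) (σ : Vis α) (T : Set Q) : Set Q :=
  {q' | ∃ q ∈ T, ∃ p, (q, min x A.m, σ, p) ∈ A.Δ ∧ er A (p, tgt x σ) (q', tgt x σ)}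

abbrev St (Q : Type*) (d : ℕ) := Set Q × Fin 4 × Prop × ZMod d

def nxt (A : OCA Q α) (d x : ℕ) (σ : Vis α) (s : St Q d) : St Q d :=
  (dT A x σ s.1, md σ s.2.1, (∃ q ∈ dT A x σ s.1, Efin A (tgt x σ) q), s.2.2.2 + dl d σ)

theorem nxt_congr {A : OCA Q α} {t d : ℕ} (hg : Good A t d) {x y : ℕ}
    (hm : min x (t+1) = min y (t+1)) (hr : (x : ZMod d) = (y : ZMod d)) (σ : Vis α) (s : St Q d) :
    nxt A d x σ s = nxt A d y σ s := by
  rcases (by omega : x = y ∨ (t+1 ≤ x ∧ t+1 ≤ y)) with rfl | ⟨hx, hy⟩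
  · rfl
  obtain ⟨ht, hg⟩ := hg
  have key := hg (tgt x σ) (tgt y σ) (by cases σ <;> simp only [tgt] <;> omega)
    (by cases σ <;> simp only [tgt] <;> omega) (by
      cases σ with
      | sym a => exact hr
      | inc => simp [tgt, hr]
      | dec =>
        simp only [tgt]
        rw [Nat.cast_sub (by omega), Nat.cast_sub (by omega), hr])
  have hT : dT A x σ s.1 = dT A y σ s.1 := by
    ext q'
    simp only [dT, Set.mem_ofPred_eq, key.1, show min x A.m = min y A.m by omega]
  simp only [nxt, hT, key.2]

open Classical in
noncomputable def rep (t d k : ℕ) (r : ZMod d) : ℕ :=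
  if h : ∃ x : ℕ, min x (t+1) = k ∧ (x : ZMod d) = r then h.choose else 0

theorem rep_spec (t d x : ℕ) : min (rep t d (min x (t+1)) (x : ZMod d)) (t+1) = min x (t+1) ∧
    ((rep t d (min x (t+1)) (x : ZMod d) : ℕ) : ZMod d) = x := by
  have h : ∃ y : ℕ, min y (t+1) = min x (t+1) ∧ (y : ZMod d) = x := ⟨x, rfl, rfl⟩
  rw [rep, dif_pos h]
  exact h.choose_spec

def ini (A : OCA Q α) (d : ℕ) : St Q d :=
  ({q | er A (A.init, 0) (q, 0)}, 0, (∃ q, er A (A.init, 0) (q, 0) ∧ Efin A 0 q), 0)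

def D (A : OCA Q α) (t d : ℕ) : OCA (St Q d) α where
  init := ini A d
  final := {s | s.2.1 = 0 ∧ s.2.2.1}
  m := t + 1
  Δ := {u | u.2.1 ≤ t + 1 ∧ u.2.2.2 = nxt A d (rep t d u.2.1 u.1.2.2.2) u.2.2.1 u.1}
  valid := fun _ h => h.1

theorem D_det (A : OCA Q α) (t d : ℕ) : (D A t d).Deterministic := by
  intro q k σ hk
  exact ⟨nxt A d (rep t d k q.2.2.2) σ q, ⟨hk, rfl⟩, fun q' h => h.2⟩

theorem D_Δ {A : OCA Q α} {t d : ℕ} (hg : Good A t d) {s : St Q d} {x : ℕ} {σ : Vis α} {s'}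
    (hs : s.2.2.2 = x) : (s, min x (D A t d).m, σ, s') ∈ (D A t d).Δ ↔ s' = nxt A d x σ s := by
  have h1 := rep_spec t d x
  have h2 := nxt_congr hg h1.1 h1.2 σ s
  constructor
  · rintro ⟨-, h⟩
    simp only [D] at h
    rw [hs, h2] at h
    exact h
  · intro h
    refine ⟨min_le_right _ _, ?_⟩
    simp only [D]
    rw [hs, h2]
    exact h

/-- invariant -/
def Inv (A : OCA Q α) {d : ℕ} (s : St Q d) (x : ℕ) : Prop :=
  s.2.2.2 = x ∧ (s.2.2.1 ↔ ∃ q ∈ s.1, Efin A x q) ∧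
    ∀ q ∈ s.1, ∀ q', er A (q, x) (q', x) → q' ∈ s.1

theorem Inv_ini (A : OCA Q α) (d : ℕ) : Inv A (ini A d) 0 :=
  ⟨by simp [ini], Iff.rfl, fun _ hq _ h => Relation.ReflTransGen.trans hq h⟩

theorem Inv_nxt {A : OCA Q α} {d : ℕ} {s : St Q d} {x : ℕ} (h : Inv A s x) (σ : Vis α)
    (hσ : σ = .dec → 1 ≤ x) : Inv A (nxt A d x σ s) (tgt x σ) := by
  refine ⟨?_, Iff.rfl, ?_⟩
  · simp only [nxt, h.1]
    cases σ with
    | sym a => simp [dl, tgt]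
    | inc => simp [dl, tgt]
    | dec => simp only [dl, tgt]; rw [Nat.cast_sub (hσ rfl)]; simp [sub_eq_add_neg]
  · rintro q ⟨q0, h0, p, hp, hr⟩ q' h'
    exact ⟨q0, h0, p, hp, hr.trans h'⟩

theorem D_step {A : OCA Q α} {t d : ℕ} (hg : Good A t d) {s : St Q d} {x : ℕ} {τ} {c}
    (hs : s.2.2.2 = x) : (D A t d).step (s, x) τ c ↔
      ((visOf τ = Vis.dec → 1 ≤ x) ∧ (∀ a y, τ = Vis.sym (a, y) → y = x) ∧
       c = (nxt A d x (visOf τ) s, tgt x (visOf τ))) := by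
  obtain ⟨s', x'⟩ := c
  rcases τ with ⟨a, y⟩ | _ | _
  · simp [OCA.step, D_Δ hg hs, visOf, tgt]; tauto
  · simp [OCA.step, D_Δ hg hs, visOf, tgt]; tauto
  · simp [OCA.step, D_Δ hg hs, visOf, tgt]; tauto

theorem D_sound {A : OCA Q α} {t d : ℕ} (hg : Good A t d) (ts) : ∀ {s : St Q d} {x : ℕ},
    Inv A s x → AccFrom (D A t d) (s, x) ts → ∃ q ∈ s.1, acc A (q, x) (obsMap ts) := by
  induction ts with
  | nil =>
    intro s x hi h
    rw [accFrom_nil] at h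
    exact hi.2.1.1 h.2
  | cons τ ts ih =>
    intro s x hi h
    rw [accFrom_cons] at h
    obtain ⟨c, hs, h⟩ := h
    rw [D_step hg hi.1] at hs
    obtain ⟨hd, hy, rfl⟩ := hs
    obtain ⟨q', ⟨q, hq, p, hp, hr⟩, ha⟩ := ih (Inv_nxt hi _ hd) h
    refine ⟨q, hq, ?_⟩
    have ha := acc_er hr ha
    rcases τ with ⟨a, y⟩ | _ | _
    · obtain rfl := hy a y rfl
      exact ⟨q, p, .refl, hp, ha⟩
    · exact acc_er (.single ⟨est_inc hp, trivial⟩) ha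
    · have := hd rfl
      obtain ⟨x, rfl⟩ : ∃ z, x = z + 1 := ⟨x - 1, by omega⟩
      exact acc_er (.single ⟨est_dec hp, trivial⟩) ha

theorem cross_up {A : OCA Q α} {x : ℕ} {c c'} (h : er A c c') (hc : c.2 ≤ x) (hc' : x < c'.2) :
    ∃ p p', er A c (p, x) ∧ (p, min x A.m, Vis.inc, p') ∈ A.Δ ∧ er A (p', x+1) c' := by
  induction h using Relation.ReflTransGen.head_induction_on with
  | refl => omega
  | @head a b hs hr ih =>
    obtain ⟨a, y⟩ := a
    obtain ⟨b, z⟩ := b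
    by_cases hz : z ≤ x
    · obtain ⟨p, p', h1, h2, h3⟩ := ih hz
      exact ⟨p, p', .head hs h1, h2, h3⟩
    · have hc : y ≤ x := hc
      rcases est_cases hs.1 with ⟨rfl, hd⟩ | ⟨he, hd⟩
      · obtain rfl : y = x := by omega
        exact ⟨a, b, .refl, hd, hr⟩
      · omega

theorem cross_down {A : OCA Q α} {x : ℕ} {c c'} (h : er A c c') (hc : x + 1 ≤ c.2)
    (hc' : c'.2 < x + 1) :
    ∃ p p', er A c (p, x+1) ∧ (p, min (x+1) A.m, Vis.dec, p') ∈ A.Δ ∧ er A (p', x) c' := by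
  induction h using Relation.ReflTransGen.head_induction_on with
  | refl => omega
  | @head a b hs hr ih =>
    obtain ⟨a, y⟩ := a
    obtain ⟨b, z⟩ := b
    by_cases hz : x + 1 ≤ z
    · obtain ⟨p, p', h1, h2, h3⟩ := ih hz
      exact ⟨p, p', .head hs h1, h2, h3⟩
    · have hc : x + 1 ≤ y := hc
      rcases est_cases hs.1 with ⟨rfl, hd⟩ | ⟨rfl, hd⟩
      · omega
      · obtain rfl : z = x := by omega
        exact ⟨a, b, .refl, hd, hr⟩

/-- moving from `x` to `z` -/
theorem D_up {A : OCA Q α} {t d : ℕ} (hg : Good A t d) {z q1 w} (n : ℕ) :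
    ∀ {x} {s : St Q d} {q}, x + n = z → Inv A s x → (s.2.1 = 0 ∨ s.2.1 = 1) → q ∈ s.1 →
    er A (q, x) (q1, z) →
    (∀ s' : St Q d, Inv A s' z → s'.2.1 ≠ 3 → q1 ∈ s'.1 →
      ∃ ts, AccFrom (D A t d) (s', z) ts ∧ obsMap ts = w) →
    ∃ ts, AccFrom (D A t d) (s, x) ts ∧ obsMap ts = w := by
  induction n with
  | zero =>
    rintro x s q rfl hi hm hq hr hk
    exact hk s hi (by rcases hm with hm | hm <;> simp [hm]) (hi.2.2 q hq q1 hr)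
  | succ n ih =>
    rintro x s q hz hi hm hq hr hk
    obtain ⟨p, p', h1, h2, h3⟩ := cross_up (x := x) hr le_rfl (by show x < z; omega)
    obtain ⟨ts, h4, h5⟩ := ih (x := x + 1) (s := nxt A d x .inc s) (q := p') (by omega)
      (Inv_nxt hi .inc (by simp)) (Or.inr (by simp [nxt, md, hm]))
      ⟨p, hi.2.2 q hq p h1, p', h2, .refl⟩ h3 hk
    refine ⟨.inc :: ts, (accFrom_cons ..).2 ⟨_, (D_step hg hi.1).2 ⟨by simp [visOf], by simp, rfl⟩, h4⟩, h5⟩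

theorem D_down {A : OCA Q α} {t d : ℕ} (hg : Good A t d) {z q1 w} (n : ℕ) :
    ∀ {x} {s : St Q d} {q}, x = z + n → Inv A s x → (s.2.1 = 0 ∨ s.2.1 = 2) → q ∈ s.1 →
    er A (q, x) (q1, z) →
    (∀ s' : St Q d, Inv A s' z → s'.2.1 ≠ 3 → q1 ∈ s'.1 →
      ∃ ts, AccFrom (D A t d) (s', z) ts ∧ obsMap ts = w) →
    ∃ ts, AccFrom (D A t d) (s, x) ts ∧ obsMap ts = w := by
  induction n with
  | zero =>
    rintro x s q rfl hi hm hq hr hk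
    exact hk s hi (by rcases hm with hm | hm <;> simp [hm]) (hi.2.2 q hq q1 hr)
  | succ n ih =>
    rintro x s q rfl hi hm hq hr hk
    obtain ⟨p, p', h1, h2, h3⟩ := cross_down (x := z + n) hr (by show _ ≤ z + (n+1); omega)
      (by show z < _; omega)
    obtain ⟨ts, h4, h5⟩ := ih (x := z + n) (s := nxt A d (z + (n+1)) .dec s) (q := p') rfl
      (Inv_nxt hi .dec (by omega)) (Or.inr (by simp [nxt, md, hm]))
      ⟨p, hi.2.2 q hq p h1, p', h2, .refl⟩ h3 hk
    refine ⟨.dec :: ts, (accFrom_cons ..).2 ⟨_, (D_step hg hi.1).2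
      ⟨by omega, by simp, rfl⟩, h4⟩, h5⟩

theorem D_complete {A : OCA Q α} {t d : ℕ} (hg : Good A t d) (w) : ∀ {s : St Q d} {x : ℕ} {q},
    Inv A s x → s.2.1 = 0 → q ∈ s.1 → acc A (q, x) w →
    ∃ ts, AccFrom (D A t d) (s, x) ts ∧ obsMap ts = w := by
  induction w with
  | nil =>
    intro s x q hi hm hq h
    exact ⟨[], (accFrom_nil ..).2 ⟨hm, hi.2.1.2 ⟨q, hq, h⟩⟩, rfl⟩
  | cons p w ih =>
    obtain ⟨a, z⟩ := p
    rintro s x q hi hm hq ⟨q1, q2, hr, hd, ha⟩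
    have hk : ∀ s' : St Q d, Inv A s' z → s'.2.1 ≠ 3 → q1 ∈ s'.1 →
        ∃ ts, AccFrom (D A t d) (s', z) ts ∧ obsMap ts = (a, z) :: w := by
      intro s' hi' hm' hq'
      obtain ⟨ts, h1, h2⟩ := ih (s := nxt A d z (.sym a) s') (x := z) (q := q2)
        (Inv_nxt hi' (.sym a) (by simp)) (by simp [nxt, md, hm']) ⟨q1, hq', q2, hd, .refl⟩ ha
      exact ⟨.sym (a, z) :: ts, (accFrom_cons ..).2 ⟨_, (D_step hg hi'.1).2
        ⟨by simp [visOf], by simp, rfl⟩, h1⟩, by rw [← h2]; rfl⟩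
    rcases le_total x z with hxz | hxz
    · exact D_up hg (z - x) (by omega) hi (Or.inl hm) hq hr hk
    · exact D_down hg (x - z) (by omega) hi (Or.inl hm) hq hr hk

theorem enc_inc {x a z} {w : List (α × ℕ)} (h : x + 1 ≤ z) :
    Vis.inc :: encFrom (x+1) ((a, z) :: w) = encFrom x ((a, z) :: w) := by
  simp only [encFrom, if_pos h, if_pos (by omega : x ≤ z)]
  rw [show z - x = (z - (x+1)) + 1 by omega, List.replicate_succ]
  rfl

theorem enc_dec {x a z} {w : List (α × ℕ)} (h : z ≤ x) :
    Vis.dec :: encFrom x ((a, z) :: w) = encFrom (x+1) ((a, z) :: w) := by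
  simp only [encFrom, if_neg (by omega : ¬ x + 1 ≤ z)]
  rw [show x + 1 - z = (x - z) + 1 by omega, List.replicate_succ]
  split_ifs with h'
  · obtain rfl : x = z := by omega
    simp
  · rfl

theorem D_vis {A : OCA Q α} {t d : ℕ} (hg : Good A t d) (ts) : ∀ {s : St Q d} {x : ℕ},
    Inv A s x → AccFrom (D A t d) (s, x) ts → s.2.1 ≠ 3 ∧
      visMap ts = encFrom x (obsMap ts) ∧
      (s.2.1 = 1 → ∃ a z w, obsMap ts = (a, z) :: w ∧ x ≤ z) ∧
      (s.2.1 = 2 → ∃ a z w, obsMap ts = (a, z) :: w ∧ z ≤ x) := by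
  induction ts with
  | nil =>
    intro s x hi h
    rw [accFrom_nil] at h
    have h0 : s.2.1 = 0 := h.1
    simp [h0, visMap, obsMap, encFrom]
  | cons τ ts ih =>
    intro s x hi h
    rw [accFrom_cons] at h
    obtain ⟨c, hs, h⟩ := h
    rw [D_step hg hi.1] at hs
    obtain ⟨hd, hy, rfl⟩ := hs
    obtain ⟨h3, hv, h1, h2⟩ := ih (Inv_nxt hi _ hd) h
    rcases τ with ⟨a, y⟩ | _ | _
    · obtain rfl := hy a y rfl
      have hm : s.2.1 ≠ 3 := by
        intro hm; simp [nxt, md, visOf, hm] at h3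
      have ho : obsMap (.sym (a, y) :: ts) = (a, y) :: obsMap ts := rfl
      refine ⟨hm, ?_, fun _ => ⟨a, y, _, ho, le_rfl⟩, fun _ => ⟨a, y, _, ho, le_rfl⟩⟩
      rw [ho]
      simp only [encFrom, le_refl, if_true, Nat.sub_self, List.replicate_zero, List.nil_append]
      exact congrArg (Vis.sym a :: ·) hv
    · have hm : s.2.1 = 0 ∨ s.2.1 = 1 := by
        by_contra hm; simp [nxt, md, visOf, hm] at h3
      obtain ⟨a, z, w, ho, hz⟩ := h1 (by simp [nxt, md, visOf, hm])
      have hz : x + 1 ≤ z := hz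
      have ho' : obsMap (.inc :: ts) = (a, z) :: w := ho
      refine ⟨by rcases hm with hm | hm <;> simp [hm], ?_, fun _ => ⟨a, z, w, ho', by omega⟩,
        fun h => by rcases hm with hm | hm <;> simp [hm] at h⟩
      rw [ho', ← enc_inc hz, ← ho]
      exact congrArg (Vis.inc :: ·) hv
    · have hm : s.2.1 = 0 ∨ s.2.1 = 2 := by
        by_contra hm; simp [nxt, md, visOf, hm] at h3
      have := hd rfl
      obtain ⟨x, rfl⟩ : ∃ z, x = z + 1 := ⟨x - 1, by omega⟩
      obtain ⟨a, z, w, ho, hz⟩ := h2 (by simp [nxt, md, visOf, hm])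
      have hz : z ≤ x := hz
      have ho' : obsMap (.dec :: ts) = (a, z) :: w := ho
      refine ⟨by rcases hm with hm | hm <;> simp [hm], ?_,
        fun h => by rcases hm with hm | hm <;> simp [hm] at h, fun _ => ⟨a, z, w, ho', by omega⟩⟩
      rw [ho', ← enc_dec hz, ← ho]
      exact congrArg (Vis.dec :: ·) hv

end S14

/-- determinizability wrt. the observability semantics: every
OCA can be transformed into a deterministic OCA with the same observability
semantics whose visibly semantics consists of valid encodings. -/
theorem stmt14 {α Q : Type} [Fintype α] [Nonempty α] [Fintype Q] (A : OCA Q α) :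
    ∃ (Q' : Type) (_ : Fintype Q') (A' : OCA Q' α),
      A'.Deterministic ∧ A'.Lobs = A.Lobs ∧ A'.Lvis ⊆ EncSet α := by
  classical
  obtain ⟨t, d, hd, hg⟩ := S14.exists_good A
  have : NeZero d := ⟨by omega⟩
  refine ⟨S14.St Q d, inferInstance, S14.D A t d, S14.D_det A t d, ?_, ?_⟩
  · ext w
    rw [S14.mem_Lobs (A := A)]
    constructor
    · rintro ⟨ts, h, rfl⟩
      obtain ⟨q, hq, ha⟩ := S14.D_sound hg ts (S14.Inv_ini A d) h
      exact S14.acc_er hq ha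
    · intro h
      exact S14.D_complete hg w (S14.Inv_ini A d) rfl Relation.ReflTransGen.refl h
  · rintro _ ⟨ts, h, rfl⟩
    exact ⟨obsMap ts, (S14.D_vis hg ts (S14.Inv_ini A d) h).2.1.symm⟩
end

section
/- For every OCA A over a nonempty finite alphabet Σ there exists a deterministic OCA Ā over Σ such that L_obs(Ā) = (Σ×ℕ)* ∖ L_obs(A). -/
variable {Q α : Type*}

namespace Obs

open Relation

/-- A counter move. -/
def mv (A : OCA Q α) (c c' : Q × ℕ) : Prop :=
  (c'.2 = c.2 + 1 ∧ (c.1, min c.2 A.m, Vis.inc, c'.1) ∈ A.Δ) ∨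
  (c.2 = c'.2 + 1 ∧ (c.1, min c.2 A.m, Vis.dec, c'.1) ∈ A.Δ)

/-- A counter move inside the levels `P`. -/
def mvB (A : OCA Q α) (P : ℕ → Prop) (c c' : Q × ℕ) : Prop :=
  mv A c c' ∧ P c.2 ∧ P c'.2

theorem mvB_mono {A : OCA Q α} {P P' : ℕ → Prop} (h : ∀ z, P z → P' z) {c c' : Q × ℕ}
    (hc : ReflTransGen (mvB A P) c c') : ReflTransGen (mvB A P') c c' :=
  ReflTransGen.mono (r := mvB A P) (p := mvB A P')
    (fun _ _ hab => ⟨hab.1, h _ hab.2.1, h _ hab.2.2⟩) _ _ hc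

theorem sim {A : OCA Q α} {x y : ℕ} (hx : A.m ≤ x) (hy : A.m ≤ y) {P P' : ℕ → Prop}
    (hPP : ∀ i, P (x + i) → P' (y + i)) (hP' : ∀ z, z ≤ y → P' z)
    (hD : ∀ p q, ReflTransGen (mvB A (· ≤ x)) (p, x) (q, x) →
      ReflTransGen (mvB A (· ≤ y)) (p, y) (q, y))
    {p : Q} {i : ℕ} {c : Q × ℕ} (h : ReflTransGen (mvB A P) (p, x + i) c) :
    (x ≤ c.2 ∧ ReflTransGen (mvB A P') (p, y + i) (c.1, y + (c.2 - x))) ∨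
    (c.2 < x ∧ ∃ r, ReflTransGen (mvB A P') (p, y + i) (r, y) ∧
      ReflTransGen (mvB A (· ≤ x)) (r, x) c) := by
  induction h with
  | refl =>
    left
    refine ⟨by simp, ?_⟩
    simp only [Nat.add_sub_cancel_left]
    exact ReflTransGen.refl
  | @tail b c _ hbc ih =>
    obtain ⟨q, z⟩ := b
    obtain ⟨q', z'⟩ := c
    obtain ⟨hm, hPz, hPz'⟩ := hbc
    simp only at hPz hPz' ih ⊢
    rcases ih with ⟨hz, ih⟩ | ⟨hz, r, ih1, ih2⟩
    · by_cases hz' : x ≤ z'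
      · left
        refine ⟨hz', ih.tail ⟨?_, ?_, ?_⟩⟩
        · unfold mv at hm ⊢
          simp only at hm ⊢
          rw [min_eq_right (by omega)] at hm ⊢
          rcases hm with ⟨h1, h2⟩ | ⟨h1, h2⟩
          · exact Or.inl ⟨by omega, h2⟩
          · exact Or.inr ⟨by omega, h2⟩
        · apply hPP
          rwa [Nat.add_sub_cancel' hz]
        · apply hPP
          rwa [Nat.add_sub_cancel' hz']
      · right
        have hzx : z = x := by
          rcases hm with ⟨h1, _⟩ | ⟨h1, _⟩ <;> simp only at h1 <;> omega
        subst hzx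
        refine ⟨by omega, q, by simpa using ih, ReflTransGen.single ⟨hm, ?_, ?_⟩⟩
        · simp
        · simp only; omega
    · have hz1 : z' ≤ x := by
        rcases hm with ⟨h1, _⟩ | ⟨h1, _⟩ <;> simp only at h1 <;> omega
      have h3 : ReflTransGen (mvB A (· ≤ x)) (r, x) (q', z') :=
        ih2.tail ⟨hm, hz.le, hz1⟩
      rcases hz1.lt_or_eq with hlt | heq
      · exact Or.inr ⟨hlt, r, ih1, h3⟩
      · left
        subst heq
        refine ⟨le_rfl, ?_⟩
        simp only [Nat.sub_self, Nat.add_zero]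
        exact ih1.trans (mvB_mono hP' (hD _ _ h3))

/-- Loops at level `x`, inside the levels `P`. -/
def D (A : OCA Q α) (P : ℕ → Prop) (x : ℕ) (p q : Q) : Prop :=
  ReflTransGen (mvB A P) (p, x) (q, x)

/-- Acceptance from level `x` inside the levels `P`. -/
def B (A : OCA Q α) (P : ℕ → Prop) (x : ℕ) (p : Q) : Prop :=
  ∃ f ∈ A.final, ∃ z, ReflTransGen (mvB A P) (p, x) (f, z)

theorem simD {A : OCA Q α} {x y : ℕ} (hx : A.m ≤ x) (hy : A.m ≤ y) {P P' : ℕ → Prop}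
    (hPP : ∀ i, P (x + i) → P' (y + i)) (hP' : ∀ z, z ≤ y → P' z)
    (hD : ∀ p q, D A (· ≤ x) x p q → D A (· ≤ y) y p q) (i : ℕ) (p q : Q)
    (h : D A P (x + i) p q) : D A P' (y + i) p q := by
  rcases sim hx hy hPP hP' hD h with ⟨_, h2⟩ | ⟨h1, _⟩
  · simpa [D] using h2
  · simp only at h1; omega

theorem simB {A : OCA Q α} {x y : ℕ} (hx : A.m ≤ x) (hy : A.m ≤ y) {P P' : ℕ → Prop}
    (hPP : ∀ i, P (x + i) → P' (y + i)) (hP' : ∀ z, z ≤ y → P' z)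
    (hD : ∀ p q, D A (· ≤ x) x p q → D A (· ≤ y) y p q)
    (hB : ∀ p, B A (· ≤ x) x p → B A (· ≤ y) y p) (i : ℕ) (p : Q)
    (h : B A P (x + i) p) : B A P' (y + i) p := by
  obtain ⟨f, hf, z, h⟩ := h
  rcases sim hx hy hPP hP' hD h with ⟨_, h2⟩ | ⟨_, r, h1, h2⟩
  · exact ⟨f, hf, _, h2⟩
  · obtain ⟨f', hf', z', h3⟩ := hB r ⟨f, hf, z, h2⟩
    exact ⟨f', hf', z', h1.trans (mvB_mono hP' h3)⟩

/-- Information at level `x` obtained from the levels up to `x`. -/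
def I (A : OCA Q α) (x : ℕ) : (Q → Q → Prop) × (Q → Prop) :=
  (D A (· ≤ x) x, B A (· ≤ x) x)

/-- Full information at level `x`. -/
def J (A : OCA Q α) (x : ℕ) : (Q → Q → Prop) × (Q → Prop) :=
  (D A (fun _ => True) x, B A (fun _ => True) x)

theorem I_succ {A : OCA Q α} {x y : ℕ} (hx : A.m ≤ x) (hy : A.m ≤ y) (h : I A x = I A y) :
    I A (x + 1) = I A (y + 1) := by
  have hD : D A (· ≤ x) x = D A (· ≤ y) y := congrArg Prod.fst h
  have hB : B A (· ≤ x) x = B A (· ≤ y) y := congrArg Prod.snd h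
  unfold I
  refine Prod.ext ?_ ?_
  · funext p q
    apply propext
    exact ⟨simD hx hy (by intro i; simp) (by intro z; omega) (by rw [hD]; simp) 1 p q,
      simD hy hx (by intro i; simp) (by intro z; omega) (by rw [hD]; simp) 1 p q⟩
  · funext p
    apply propext
    exact ⟨simB hx hy (by intro i; simp) (by intro z; omega) (by rw [hD]; simp)
        (by rw [hB]; simp) 1 p,
      simB hy hx (by intro i; simp) (by intro z; omega) (by rw [hD]; simp)
        (by rw [hB]; simp) 1 p⟩

theorem J_eq {A : OCA Q α} {x y : ℕ} (hx : A.m ≤ x) (hy : A.m ≤ y) (h : I A x = I A y) :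
    J A x = J A y := by
  have hD : D A (· ≤ x) x = D A (· ≤ y) y := congrArg Prod.fst h
  have hB : B A (· ≤ x) x = B A (· ≤ y) y := congrArg Prod.snd h
  unfold J
  refine Prod.ext ?_ ?_
  · funext p q
    apply propext
    exact ⟨simD hx hy (by intro i; simp) (by intro z; simp) (by rw [hD]; simp) 0 p q,
      simD hy hx (by intro i; simp) (by intro z; simp) (by rw [hD]; simp) 0 p q⟩
  · funext p
    apply propext
    exact ⟨simB hx hy (by intro i; simp) (by intro z; simp) (by rw [hD]; simp)
        (by rw [hB]; simp) 0 p,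
      simB hy hx (by intro i; simp) (by intro z; simp) (by rw [hD]; simp)
        (by rw [hB]; simp) 0 p⟩

theorem J_periodic [Finite Q] (A : OCA Q α) :
    ∃ t d, A.m ≤ t ∧ 1 ≤ d ∧ ∀ x, t ≤ x → J A (x + d) = J A x := by
  obtain ⟨a, b, hab, h⟩ := Finite.exists_ne_map_eq_of_infinite (fun n => I A (A.m + n))
  have key : ∀ a b, a < b → I A (A.m + a) = I A (A.m + b) →
      ∃ t d, A.m ≤ t ∧ 1 ≤ d ∧ ∀ x, t ≤ x → J A (x + d) = J A x := by
    intro a b hab h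
    refine ⟨A.m + a, b - a, by omega, by omega, ?_⟩
    have hI : ∀ n, I A (A.m + a + n + (b - a)) = I A (A.m + a + n) := by
      intro n
      induction n with
      | zero =>
        rw [show A.m + a + 0 + (b - a) = A.m + b by omega]
        exact h.symm
      | succ n ih =>
        have := I_succ (by omega) (by omega) ih
        rw [show A.m + a + (n + 1) + (b - a) = A.m + a + n + (b - a) + 1 by omega]
        exact this
    intro x hx
    apply J_eq (by omega) (by omega)
    have := hI (x - (A.m + a))
    rwa [show A.m + a + (x - (A.m + a)) = x by omega] at this
  rcases lt_or_gt_of_ne hab with h1 | h1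
  · exact key a b h1 h
  · exact key b a h1 h.symm

/-- Acceptance of a trace by a level dependent deterministic device. -/
def Acc {P : Type*} (δ : ℕ → Vis α → P → P) (F : Set P) :
    ℕ → P → List (Vis (α × ℕ)) → Prop
  | _, p, [] => p ∈ F
  | x, p, Vis.inc :: ts => Acc δ F (x + 1) (δ x Vis.inc p) ts
  | x, p, Vis.dec :: ts => 1 ≤ x ∧ Acc δ F (x - 1) (δ x Vis.dec p) ts
  | x, p, Vis.sym (a, y) :: ts => y = x ∧ Acc δ F x (δ x (Vis.sym a) p) ts

theorem run_ne_nil {A : OCA Q α} {c : Q × ℕ} {ts : List (Vis (α × ℕ))} {cs : List (Q × ℕ)}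
    (h : A.RunFrom c ts cs) : cs ≠ [] := by
  cases h <;> simp

/-- Acceptance of a trace from a configuration. -/
def AccFrom (A : OCA Q α) (c : Q × ℕ) (ts : List (Vis (α × ℕ))) : Prop :=
  ∃ cs c', A.RunFrom c ts cs ∧ cs.getLast? = some c' ∧ c'.1 ∈ A.final

theorem accFrom_nil {A : OCA Q α} {c : Q × ℕ} : AccFrom A c [] ↔ c.1 ∈ A.final := by
  constructor
  · rintro ⟨cs, c', h, hl, hf⟩
    cases h
    simp at hl
    subst hl
    exact hf
  · intro h
    exact ⟨[c], c, OCA.RunFrom.nil c, by simp, h⟩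

theorem accFrom_cons {A : OCA Q α} {c : Q × ℕ} {τ : Vis (α × ℕ)} {ts : List (Vis (α × ℕ))} :
    AccFrom A c (τ :: ts) ↔ ∃ c', A.step c τ c' ∧ AccFrom A c' ts := by
  constructor
  · rintro ⟨cs, c', h, hl, hf⟩
    cases h with
    | @cons _ c1 _ _ cs hs hr =>
      refine ⟨c1, hs, cs, c', hr, ?_, hf⟩
      rw [List.getLast?_cons_of_ne_nil (run_ne_nil hr)] at hl
      exact hl
  · rintro ⟨c1, hs, cs, c', hr, hl, hf⟩
    refine ⟨c :: cs, c', OCA.RunFrom.cons hs hr, ?_, hf⟩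
    rw [List.getLast?_cons_of_ne_nil (run_ne_nil hr)]
    exact hl

/-- Change of the phase. -/
def ph (d : ℕ) : Vis α → ZMod d → ZMod d
  | Vis.inc, c => c + 1
  | Vis.dec, c => c - 1
  | Vis.sym _, c => c

theorem exists_det {P : Type} [Finite P] (δ : ℕ → Vis α → P → P) (F : Set P) (p0 : P)
    (t d : ℕ) (hd : 1 ≤ d) (hδ : ∀ x, t ≤ x → δ (x + d) = δ x) :
    ∃ (Q' : Type) (_ : Fintype Q') (A' : OCA Q' α), A'.Deterministic ∧
      ∀ ts, A'.AccTrace ts ↔ Acc δ F 0 p0 ts := by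
  classical
  have : NeZero d := ⟨by omega⟩
  have hδk : ∀ x k, t ≤ x → δ (x + d * k) = δ x := by
    intro x k hx
    induction k with
    | zero => simp
    | succ k ih => rw [Nat.mul_succ, ← Nat.add_assoc, hδ _ (by omega), ih]
  have hrep : ∀ x y, min x t = min y t → (x : ZMod d) = (y : ZMod d) → δ x = δ y := by
    have aux : ∀ x y, x ≤ y → min x t = min y t → (x : ZMod d) = (y : ZMod d) → δ x = δ y := by
      intro x y hle h1 h2
      rcases lt_or_ge x t with hx | hx
      · rw [show x = y by omega]
      · rw [ZMod.natCast_eq_natCast_iff] at h2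
        obtain ⟨k, hk⟩ := (Nat.modEq_iff_dvd' hle).1 h2
        rw [show y = x + d * k by omega, hδk x k hx]
    intro x y h1 h2
    rcases le_total x y with h | h
    · exact aux x y h h1 h2
    · exact (aux y x h h1.symm h2.symm).symm
  let g : ℕ → ZMod d → Vis α → P → P := fun k c =>
    if h : ∃ x : ℕ, min x t = k ∧ (x : ZMod d) = c then δ h.choose else δ 0
  have hg : ∀ x : ℕ, g (min x t) (x : ZMod d) = δ x := by
    intro x
    have h : ∃ y : ℕ, min y t = min x t ∧ (y : ZMod d) = (x : ZMod d) := ⟨x, rfl, rfl⟩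
    simp only [g, dif_pos h]
    exact hrep _ _ h.choose_spec.1 h.choose_spec.2
  let A' : OCA (P × ZMod d) α :=
    { init := (p0, 0)
      final := {s | s.1 ∈ F}
      m := t
      Δ := {e | e.2.1 ≤ t ∧ e.2.2.2 = (g e.2.1 e.1.2 e.2.2.1 e.1.1, ph d e.2.2.1 e.1.2)}
      valid := fun _ he => he.1 }
  refine ⟨P × ZMod d, Fintype.ofFinite _, A', ?_, ?_⟩
  · intro q k σ hk
    exact ⟨(g k q.2 σ q.1, ph d σ q.2), ⟨hk, rfl⟩, fun q' h => h.2⟩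
  · have main : ∀ (ts : List (Vis (α × ℕ))) (x : ℕ) (p : P),
        AccFrom A' ((p, (x : ZMod d)), x) ts ↔ Acc δ F x p ts := by
      intro ts
      induction ts with
      | nil => intro x p; rw [accFrom_nil]; rfl
      | cons τ ts ih =>
        intro x p
        rw [accFrom_cons]
        rcases τ with ⟨a, y⟩ | _ | _
        · simp only [Acc]
          rw [← ih, ← hg]
          constructor
          · rintro ⟨⟨s, z⟩, ⟨h1, h2, h3, h4⟩, h5⟩
            simp only at h4
            subst h1 h2 h4
            exact ⟨rfl, h5⟩
          · rintro ⟨h1, h2⟩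
            exact ⟨_, ⟨h1, rfl, min_le_right _ _, rfl⟩, h2⟩
        · simp only [Acc]
          rw [← ih, ← hg]
          constructor
          · rintro ⟨⟨s, z⟩, ⟨h2, h3, h4⟩, h5⟩
            simp only at h4
            subst h2 h4
            rw [Nat.cast_succ]
            exact h5
          · intro h2
            rw [Nat.cast_succ] at h2
            exact ⟨_, ⟨rfl, min_le_right _ _, rfl⟩, h2⟩
        · simp only [Acc]
          rw [← ih, ← hg]
          constructor
          · rintro ⟨⟨s, z⟩, ⟨h1, h2, h3, h4⟩, h5⟩
            simp only at h4
            subst h2 h4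
            rw [Nat.cast_sub h1, Nat.cast_one]
            exact ⟨h1, h5⟩
          · rintro ⟨h1, h2⟩
            rw [Nat.cast_sub h1, Nat.cast_one] at h2
            exact ⟨_, ⟨h1, rfl, min_le_right _ _, rfl⟩, h2⟩
    intro ts
    have := main ts 0 p0
    rw [Nat.cast_zero] at this
    exact this

/-- Unrestricted reachability. -/
abbrev Re (A : OCA Q α) : Q × ℕ → Q × ℕ → Prop := ReflTransGen (mvB A (fun _ => True))

/-- Acceptance of an observation from a configuration. -/
def LA (A : OCA Q α) : ℕ → Q → List (α × ℕ) → Prop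
  | x, p, [] => B A (fun _ => True) x p
  | x, p, (a, y) :: w => ∃ r r', Re A (p, x) (r, y) ∧
      (r, min y A.m, Vis.sym a, r') ∈ A.Δ ∧ LA A y r' w

theorem LA_trans {A : OCA Q α} {p p' : Q} {x x' : ℕ} {w : List (α × ℕ)}
    (h : Re A (p, x) (p', x')) (hL : LA A x' p' w) : LA A x p w := by
  cases w with
  | nil =>
    obtain ⟨f, hf, z, h2⟩ := hL
    exact ⟨f, hf, z, h.trans h2⟩
  | cons a w =>
    obtain ⟨r, r', h1, h2⟩ := hL
    exact ⟨r, r', h.trans h1, h2⟩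

theorem LA_of_acc {A : OCA Q α} (ts : List (Vis (α × ℕ))) : ∀ (p : Q) (x : ℕ),
    AccFrom A (p, x) ts → LA A x p (obsMap ts) := by
  induction ts with
  | nil =>
    intro p x h
    rw [accFrom_nil] at h
    exact ⟨p, h, x, ReflTransGen.refl⟩
  | cons τ ts ih =>
    intro p x h
    rw [accFrom_cons] at h
    obtain ⟨⟨q, z⟩, hs, ha⟩ := h
    have := ih q z ha
    rcases τ with ⟨a, y⟩ | _ | _
    · obtain ⟨h1, h2, h3⟩ := hs
      subst h1 h2
      exact ⟨p, q, ReflTransGen.refl, h3, this⟩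
    · obtain ⟨h1, h2⟩ := hs
      exact LA_trans (ReflTransGen.single ⟨Or.inl ⟨h1, h2⟩, trivial, trivial⟩) this
    · obtain ⟨h0, h1, h2⟩ := hs
      refine LA_trans (ReflTransGen.single ⟨Or.inr ⟨?_, h2⟩, trivial, trivial⟩) this
      simp only; omega

theorem acc_of_Re {A : OCA Q α} {c c' : Q × ℕ} (h : Re A c c') (w : List (α × ℕ))
    (h' : ∃ ts, AccFrom A c' ts ∧ obsMap ts = w) : ∃ ts, AccFrom A c ts ∧ obsMap ts = w := by
  induction h using ReflTransGen.head_induction_on with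
  | refl => exact h'
  | @head a b hab _ ih =>
    obtain ⟨ts, h1, h2⟩ := ih
    obtain ⟨q, x⟩ := a
    obtain ⟨q', x'⟩ := b
    rcases hab.1 with ⟨h3, h4⟩ | ⟨h3, h4⟩ <;> simp only at h3
    · exact ⟨Vis.inc :: ts, accFrom_cons.2 ⟨_, ⟨h3, h4⟩, h1⟩, h2⟩
    · exact ⟨Vis.dec :: ts, accFrom_cons.2 ⟨_, ⟨by omega, by omega, h4⟩, h1⟩, h2⟩

theorem acc_of_LA {A : OCA Q α} (w : List (α × ℕ)) : ∀ (p : Q) (x : ℕ),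
    LA A x p w → ∃ ts, AccFrom A (p, x) ts ∧ obsMap ts = w := by
  induction w with
  | nil =>
    rintro p x ⟨f, hf, z, h⟩
    exact acc_of_Re h [] ⟨[], accFrom_nil.2 hf, rfl⟩
  | cons a w ih =>
    obtain ⟨a, y⟩ := a
    rintro p x ⟨r, r', h1, h2, h3⟩
    obtain ⟨ts, h4, h5⟩ := ih r' y h3
    refine acc_of_Re h1 _ ⟨Vis.sym (a, y) :: ts, accFrom_cons.2 ⟨_, ⟨rfl, rfl, h2⟩, h4⟩, ?_⟩
    rw [← h5]
    rfl

theorem mem_Lobs {A : OCA Q α} (w : List (α × ℕ)) : w ∈ A.Lobs ↔ LA A 0 A.init w := by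
  constructor
  · rintro ⟨ts, h, rfl⟩
    exact LA_of_acc ts _ _ h
  · intro h
    exact acc_of_LA w _ _ h

/-- The level after a letter. -/
def nxt : Vis α → ℕ → ℕ
  | Vis.inc, x => x + 1
  | Vis.dec, x => x - 1
  | Vis.sym _, x => x

/-- Update of the set of states. -/
def updT (A : OCA Q α) (x : ℕ) (σ : Vis α) (T : Set Q) : Set Q :=
  {p | ∃ r ∈ T, ∃ r', (r, min x A.m, σ, r') ∈ A.Δ ∧ (J A (nxt σ x)).1 r' p}

/-- Update of the mode. -/
def updM : Vis α → Prop × Prop → Prop × Prop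
  | Vis.inc, (u, _) => (u, False)
  | Vis.dec, (_, v) => (False, v)
  | Vis.sym _, (u, v) => (u ∨ v, u ∨ v)

/-- The deterministic device. -/
def del (A : OCA Q α) (x : ℕ) (σ : Vis α) (s : Set Q × (Prop × Prop) × Prop) :
    Set Q × (Prop × Prop) × Prop :=
  (updT A x σ s.1, updM σ s.2.1, ∃ p ∈ updT A x σ s.1, (J A (nxt σ x)).2 p)

/-- Invariant of the device. -/
def Inv (A : OCA Q α) (x : ℕ) (s : Set Q × (Prop × Prop) × Prop) : Prop :=
  (∀ p ∈ s.1, ∀ q, Re A (p, x) (q, x) → q ∈ s.1) ∧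
    (s.2.2 ↔ ∃ p ∈ s.1, B A (fun _ => True) x p)

theorem Inv_del {A : OCA Q α} (x : ℕ) (σ : Vis α) (s : Set Q × (Prop × Prop) × Prop) :
    Inv A (nxt σ x) (del A x σ s) := by
  refine ⟨?_, Iff.rfl⟩
  rintro p ⟨r, hr, r', h1, h2⟩ q hq
  exact ⟨r, hr, r', h1, ReflTransGen.trans h2 hq⟩

/-- Final states of the device. -/
def Fi : Set (Set Q × (Prop × Prop) × Prop) := {s | s.2.1.1 ∧ s.2.1.2 ∧ ¬ s.2.2}

/-- Observations that are still possible in a mode. -/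
def Ok (m : Prop × Prop) (x : ℕ) (w : List (α × ℕ)) : Prop :=
  (m.1 ∧ m.2) ∨ ∃ a y w', w = (a, y) :: w' ∧ ((m.1 ∧ x ≤ y) ∨ (m.2 ∧ y ≤ x))

theorem key_inc {A : OCA Q α} {x : ℕ} {T : Set Q}
    (hT : ∀ p ∈ T, ∀ q, Re A (p, x) (q, x) → q ∈ T) {a : α} {y : ℕ} {w : List (α × ℕ)}
    (hy : x + 1 ≤ y) :
    (∃ p ∈ T, LA A x p ((a, y) :: w)) ↔
      ∃ p ∈ updT A x Vis.inc T, LA A (x + 1) p ((a, y) :: w) := by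
  constructor
  · rintro ⟨p, hp, r, r', h1, h2⟩
    have aux : ∀ c : Q × ℕ, Re A (p, x) c →
        c.2 ≤ x ∨ ∃ p ∈ updT A x Vis.inc T, Re A (p, x + 1) c := by
      intro c hc
      induction hc with
      | refl => exact Or.inl le_rfl
      | @tail b c hb hbc ih =>
        rcases ih with ih | ⟨p', hp', ih⟩
        · by_cases hcx : c.2 ≤ x
          · exact Or.inl hcx
          · right
            obtain ⟨q, z⟩ := b
            obtain ⟨q', z'⟩ := c
            simp only at ih hcx
            rcases hbc.1 with ⟨h3, h4⟩ | ⟨h3, h4⟩ <;> simp only at h3 h4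
            · obtain rfl : z = x := by omega
              subst h3
              exact ⟨q', ⟨q, hT p hp q hb, q', h4, ReflTransGen.refl⟩, ReflTransGen.refl⟩
            · omega
        · exact Or.inr ⟨p', hp', ih.tail hbc⟩
    rcases aux _ h1 with h | ⟨p', hp', h⟩
    · simp only at h; omega
    · exact ⟨p', hp', r, r', h, h2⟩
  · rintro ⟨p, ⟨q, hq, q', h1, h2⟩, h3⟩
    exact ⟨q, hq, LA_trans (ReflTransGen.head
      (show mvB A (fun _ => True) (q, x) (q', x + 1) from ⟨Or.inl ⟨rfl, h1⟩, trivial, trivial⟩)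
      h2) h3⟩

theorem key_dec {A : OCA Q α} {x : ℕ} {T : Set Q}
    (hT : ∀ p ∈ T, ∀ q, Re A (p, x) (q, x) → q ∈ T) {a : α} {y : ℕ} {w : List (α × ℕ)}
    (hx : 1 ≤ x) (hy : y ≤ x - 1) :
    (∃ p ∈ T, LA A x p ((a, y) :: w)) ↔
      ∃ p ∈ updT A x Vis.dec T, LA A (x - 1) p ((a, y) :: w) := by
  constructor
  · rintro ⟨p, hp, r, r', h1, h2⟩
    have aux : ∀ c : Q × ℕ, Re A (p, x) c →
        x ≤ c.2 ∨ ∃ p ∈ updT A x Vis.dec T, Re A (p, x - 1) c := by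
      intro c hc
      induction hc with
      | refl => exact Or.inl le_rfl
      | @tail b c hb hbc ih =>
        rcases ih with ih | ⟨p', hp', ih⟩
        · by_cases hcx : x ≤ c.2
          · exact Or.inl hcx
          · right
            obtain ⟨q, z⟩ := b
            obtain ⟨q', z'⟩ := c
            simp only at ih hcx
            rcases hbc.1 with ⟨h3, h4⟩ | ⟨h3, h4⟩ <;> simp only at h3 h4
            · omega
            · obtain rfl : z = x := by omega
              obtain rfl : z' = z - 1 := by omega
              exact ⟨q', ⟨q, hT p hp q hb, q', h4, ReflTransGen.refl⟩, ReflTransGen.refl⟩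
        · exact Or.inr ⟨p', hp', ih.tail hbc⟩
    rcases aux _ h1 with h | ⟨p', hp', h⟩
    · simp only at h; omega
    · exact ⟨p', hp', r, r', h, h2⟩
  · rintro ⟨p, ⟨q, hq, q', h1, h2⟩, h3⟩
    exact ⟨q, hq, LA_trans (ReflTransGen.head
      (show mvB A (fun _ => True) (q, x) (q', x - 1) from
        ⟨Or.inr ⟨by simp only; omega, h1⟩, trivial, trivial⟩)
      h2) h3⟩

theorem key_sym {A : OCA Q α} {x : ℕ} {T : Set Q}
    (hT : ∀ p ∈ T, ∀ q, Re A (p, x) (q, x) → q ∈ T) {a : α} {w : List (α × ℕ)} :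
    (∃ p ∈ T, LA A x p ((a, x) :: w)) ↔
      ∃ p ∈ updT A x (Vis.sym a) T, LA A x p w := by
  constructor
  · rintro ⟨p, hp, r, r', h1, h2, h3⟩
    exact ⟨r', ⟨r, hT p hp r h1, r', h2, ReflTransGen.refl⟩, h3⟩
  · rintro ⟨p, ⟨q, hq, q', h1, h2⟩, h3⟩
    exact ⟨q, hq, q, q', ReflTransGen.refl, h1, LA_trans h2 h3⟩

theorem sound {A : OCA Q α} (ts : List (Vis (α × ℕ))) :
    ∀ (x : ℕ) (s : Set Q × (Prop × Prop) × Prop), Inv A x s → Acc (del A) Fi x s ts →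
      Ok s.2.1 x (obsMap ts) ∧ ¬ ∃ p ∈ s.1, LA A x p (obsMap ts) := by
  induction ts with
  | nil =>
    intro x s hs h
    exact ⟨Or.inl ⟨h.1, h.2.1⟩, fun h' => h.2.2 (hs.2.2 h')⟩
  | cons τ ts ih =>
    rintro x ⟨T, ⟨u, v⟩, b⟩ hs h
    rcases τ with ⟨a, y⟩ | _ | _
    · obtain ⟨rfl, h⟩ := h
      obtain ⟨h1, h2⟩ := ih _ _ (Inv_del y (Vis.sym a) _) h
      have hw : obsMap (Vis.sym (a, y) :: ts) = (a, y) :: obsMap ts := rfl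
      rw [hw, key_sym hs.1]
      refine ⟨?_, h2⟩
      refine Or.inr ⟨a, y, _, rfl, ?_⟩
      simp only [Ok, del, updM] at h1
      simp only [le_refl, and_true]
      rcases h1 with h1 | ⟨_, _, _, _, h1⟩ <;> tauto
    · obtain ⟨h1, h2⟩ := ih _ _ (Inv_del x Vis.inc _) h
      have hw : obsMap (Vis.inc :: ts) = obsMap ts := rfl
      rw [hw]
      simp only [Ok, del, updM, nxt, and_false, false_and, or_false, false_or] at h1
      obtain ⟨a, y, w', hw', hu, hy⟩ := h1
      rw [hw'] at h2 ⊢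
      refine ⟨Or.inr ⟨a, y, w', rfl, Or.inl ⟨hu, by omega⟩⟩, ?_⟩
      rw [key_inc hs.1 hy]
      exact h2
    · obtain ⟨hx, h⟩ := h
      obtain ⟨h1, h2⟩ := ih _ _ (Inv_del x Vis.dec _) h
      have hw : obsMap (Vis.dec :: ts) = obsMap ts := rfl
      rw [hw]
      simp only [Ok, del, updM, nxt, and_false, false_and, or_false, false_or] at h1
      obtain ⟨a, y, w', hw', hu, hy⟩ := h1
      rw [hw'] at h2 ⊢
      refine ⟨Or.inr ⟨a, y, w', rfl, Or.inr ⟨hu, by omega⟩⟩, ?_⟩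
      rw [key_dec hs.1 hx hy]
      exact h2

theorem complete {A : OCA Q α} (w : List (α × ℕ)) :
    ∀ (x : ℕ) (s : Set Q × (Prop × Prop) × Prop), Inv A x s → Ok s.2.1 x w →
      (¬ ∃ p ∈ s.1, LA A x p w) → ∃ ts, obsMap ts = w ∧ Acc (del A) Fi x s ts := by
  induction w with
  | nil =>
    intro x s hs hok h
    refine ⟨[], rfl, ?_⟩
    rcases hok with hok | ⟨_, _, _, h', _⟩
    · exact ⟨hok.1, hok.2, fun hb => h (hs.2.1 hb)⟩
    · cases h'
  | cons e w ih =>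
    obtain ⟨a, y⟩ := e
    have main : ∀ (n x : ℕ) (s : Set Q × (Prop × Prop) × Prop), (x - y) + (y - x) = n →
        Inv A x s → Ok s.2.1 x ((a, y) :: w) →
        (¬ ∃ p ∈ s.1, LA A x p ((a, y) :: w)) →
        ∃ ts, obsMap ts = (a, y) :: w ∧ Acc (del A) Fi x s ts := by
      intro n
      induction n with
      | zero =>
        rintro x ⟨T, ⟨u, v⟩, b⟩ hn hs hok h
        obtain rfl : x = y := by omega
        rw [key_sym hs.1] at h
        have huv : u ∨ v := by
          rcases hok with hok | ⟨_, _, _, _, h1⟩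
          · exact Or.inl hok.1
          · simp only at h1; tauto
        obtain ⟨ts, h1, h2⟩ := ih x (del A x (Vis.sym a) (T, (u, v), b))
          (Inv_del x (Vis.sym a) _) (Or.inl ⟨huv, huv⟩) h
        exact ⟨Vis.sym (a, x) :: ts, by rw [← h1]; rfl, rfl, h2⟩
      | succ n ihn =>
        rintro x ⟨T, ⟨u, v⟩, b⟩ hn hs hok h
        have hok' : (u ∧ x ≤ y) ∨ (v ∧ y ≤ x) := by
          rcases hok with hok | ⟨_, _, _, h0, h1⟩
          · rcases le_total x y with h | h
            · exact Or.inl ⟨hok.1, h⟩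
            · exact Or.inr ⟨hok.2, h⟩
          · cases h0
            exact h1
        rcases hok' with ⟨hu, hxy⟩ | ⟨hv, hxy⟩
        · rw [key_inc hs.1 (by omega)] at h
          obtain ⟨ts, h1, h2⟩ := ihn (x + 1) (del A x Vis.inc (T, (u, v), b)) (by omega)
            (Inv_del x Vis.inc _) (Or.inr ⟨a, y, w, rfl, Or.inl ⟨hu, by omega⟩⟩) h
          exact ⟨Vis.inc :: ts, h1, h2⟩
        · rw [key_dec hs.1 (by omega) (by omega)] at h
          obtain ⟨ts, h1, h2⟩ := ihn (x - 1) (del A x Vis.dec (T, (u, v), b)) (by omega)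
            (Inv_del x Vis.dec _) (Or.inr ⟨a, y, w, rfl, Or.inr ⟨hv, by omega⟩⟩) h
          exact ⟨Vis.dec :: ts, h1, by omega, h2⟩
    intro x s
    exact main _ x s rfl

end Obs

/-- complementability wrt. the observability semantics. -/
theorem stmt15 {α Q : Type} [Fintype α] [Nonempty α] [Fintype Q] (A : OCA Q α) :
    ∃ (Q' : Type) (_ : Fintype Q') (A' : OCA Q' α),
      A'.Deterministic ∧ A'.Lobs = Set.univ \ A.Lobs := by
  obtain ⟨t, d, htm, hd, hJ⟩ := Obs.J_periodic A
  have hdel : ∀ x, t + 1 ≤ x → Obs.del A (x + d) = Obs.del A x := by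
    intro x hx
    have hn : ∀ σ : Vis α, Obs.J A (Obs.nxt σ (x + d)) = Obs.J A (Obs.nxt σ x) := by
      intro σ
      cases σ with
      | sym a => exact hJ x (by omega)
      | inc =>
        have := hJ (x + 1) (by omega)
        rwa [show x + 1 + d = x + d + 1 by omega] at this
      | dec =>
        have := hJ (x - 1) (by omega)
        rwa [show x - 1 + d = x + d - 1 by omega] at this
    have hmin : min (x + d) A.m = min x A.m := by omega
    funext σ s
    simp only [Obs.del, Obs.updT, hn, hmin]
  let T0 : Set Q := {p | Obs.Re A (A.init, 0) (p, 0)}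
  let s0 : Set Q × (Prop × Prop) × Prop :=
    (T0, (True, True), ∃ p ∈ T0, Obs.B A (fun _ => True) 0 p)
  have hinv : Obs.Inv A 0 s0 := ⟨fun p hp q hq => Relation.ReflTransGen.trans hp hq, Iff.rfl⟩
  have hT0 : ∀ w, (∃ p ∈ s0.1, Obs.LA A 0 p w) ↔ w ∈ A.Lobs := by
    intro w
    rw [Obs.mem_Lobs]
    constructor
    · rintro ⟨p, hp, h⟩
      exact Obs.LA_trans hp h
    · intro h
      exact ⟨A.init, Relation.ReflTransGen.refl, h⟩
  obtain ⟨Q', hQ', A', hdet, hacc⟩ := Obs.exists_det (Obs.del A) Obs.Fi s0 (t + 1) d hd hdel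
  refine ⟨Q', hQ', A', hdet, ?_⟩
  ext w
  constructor
  · rintro ⟨ts, h, rfl⟩
    rw [hacc] at h
    refine ⟨trivial, fun hw => ?_⟩
    exact (Obs.sound ts 0 s0 hinv h).2 ((hT0 _).2 hw)
  · rintro ⟨_, hw⟩
    obtain ⟨ts, h1, h2⟩ := Obs.complete w 0 s0 hinv (Or.inl ⟨trivial, trivial⟩)
      (fun h => hw ((hT0 w).1 h))
    exact ⟨ts, (hacc ts).2 h2, h1⟩
end

section
/- For every nonempty finite alphabet Σ, the class of languages {L_obs(A) : A an OCA over Σ} ⊆ 𝒫((Σ×ℕ)*) is closed under complement relative to (Σ×ℕ)*, under binary intersection, and under binary union. -/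
variable {Q α : Type*}

/-- The class of observability languages of OCAs over the alphabet `α`. -/
def ObsClass (α : Type) : Set (Set (List (α × ℕ))) :=
  {L | ∃ (Q : Type) (_ : Fintype Q) (A : OCA Q α), A.Lobs = L}

/-! ### Silent reachability -/

def OCA.sil (A : OCA Q α) (c c' : Q × ℕ) : Prop := A.step c Vis.inc c' ∨ A.step c Vis.dec c'

def OCA.Rc (A : OCA Q α) : Q × ℕ → Q × ℕ → Prop := Relation.ReflTransGen A.sil

def OCA.AccF (A : OCA Q α) (c : Q × ℕ) : Prop := ∃ c', A.Rc c c' ∧ c'.1 ∈ A.final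

def OCA.AccW (A : OCA Q α) : Q × ℕ → List (α × ℕ) → Prop
  | c, [] => A.AccF c
  | c, (a, y) :: w => ∃ q p, A.Rc c (q, y) ∧ (q, min y A.m, Vis.sym a, p) ∈ A.Δ ∧ A.AccW (p, y) w

def OCA.AccFrom (A : OCA Q α) (c : Q × ℕ) (ts : List (Vis (α × ℕ))) : Prop :=
  ∃ cs c', A.RunFrom c ts cs ∧ cs.getLast? = some c' ∧ c'.1 ∈ A.final

theorem OCA.accFrom_nil (A : OCA Q α) (c : Q × ℕ) : A.AccFrom c [] ↔ c.1 ∈ A.final := by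
  constructor
  · rintro ⟨cs, c', h, h1, h2⟩
    cases h
    simp at h1
    subst h1
    exact h2
  · intro h
    exact ⟨[c], c, OCA.RunFrom.nil c, by simp, h⟩

theorem OCA.RunFrom.ne_nil {A : OCA Q α} {c : Q × ℕ} {ts cs} (h : A.RunFrom c ts cs) :
    cs ≠ [] := by
  cases h <;> simp

theorem OCA.accFrom_cons (A : OCA Q α) (c : Q × ℕ) (τ) (ts) :
    A.AccFrom c (τ :: ts) ↔ ∃ c', A.step c τ c' ∧ A.AccFrom c' ts := by
  constructor
  · rintro ⟨cs, c', h, h1, h2⟩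
    cases h with
    | cons hs hr =>
      refine ⟨_, hs, _, c', hr, ?_, h2⟩
      have := hr.ne_nil
      rw [List.getLast?_cons_of_ne_nil this] at h1
      exact h1
  · rintro ⟨c', hs, cs, c'', hr, h1, h2⟩
    refine ⟨_, c'', OCA.RunFrom.cons hs hr, ?_, h2⟩
    rw [List.getLast?_cons_of_ne_nil hr.ne_nil]
    exact h1

theorem OCA.accW_head (A : OCA Q α) {c c' : Q × ℕ} (h : A.sil c c') (w) (hw : A.AccW c' w) :
    A.AccW c w := by
  cases w with
  | nil =>
    obtain ⟨e, h1, h2⟩ := hw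
    exact ⟨e, Relation.ReflTransGen.head h h1, h2⟩
  | cons b w =>
    obtain ⟨a, y⟩ := b
    obtain ⟨q, p, h1, h2⟩ := hw
    exact ⟨q, p, Relation.ReflTransGen.head h h1, h2⟩

theorem OCA.accW_of (A : OCA Q α) (ts) : ∀ c, A.AccFrom c ts → A.AccW c (obsMap ts) := by
  induction ts with
  | nil =>
    intro c h
    rw [A.accFrom_nil] at h
    exact ⟨c, Relation.ReflTransGen.refl, h⟩
  | cons τ ts ih =>
    intro c h
    rw [A.accFrom_cons] at h
    obtain ⟨c', hs, h⟩ := h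
    have h := ih _ h
    cases τ with
    | inc => exact A.accW_head (Or.inl hs) _ h
    | dec => exact A.accW_head (Or.inr hs) _ h
    | sym b =>
      obtain ⟨a, y⟩ := b
      obtain ⟨q, x⟩ := c
      obtain ⟨q', x'⟩ := c'
      obtain ⟨h1, h2, h3⟩ := hs
      subst h1 h2
      exact ⟨q, q', Relation.ReflTransGen.refl, h3, h⟩

theorem OCA.exists_of_rc (A : OCA Q α) {c c' : Q × ℕ} (h : A.Rc c c') (w)
    (hw : ∃ ts, A.AccFrom c' ts ∧ obsMap ts = w) : ∃ ts, A.AccFrom c ts ∧ obsMap ts = w := by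
  induction h using Relation.ReflTransGen.head_induction_on with
  | refl => exact hw
  | head h1 _ ih =>
    obtain ⟨ts, h2, h3⟩ := ih
    rcases h1 with h1 | h1
    · exact ⟨Vis.inc :: ts, (A.accFrom_cons _ _ _).2 ⟨_, h1, h2⟩, h3⟩
    · exact ⟨Vis.dec :: ts, (A.accFrom_cons _ _ _).2 ⟨_, h1, h2⟩, h3⟩

theorem OCA.exists_of_accW (A : OCA Q α) (w) :
    ∀ c, A.AccW c w → ∃ ts, A.AccFrom c ts ∧ obsMap ts = w := by
  induction w with
  | nil =>
    rintro c ⟨c', h, h2⟩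
    exact A.exists_of_rc h _ ⟨[], (A.accFrom_nil _).2 h2, rfl⟩
  | cons b w ih =>
    obtain ⟨a, y⟩ := b
    rintro c ⟨q, p, h1, h2, h3⟩
    obtain ⟨ts, h4, h5⟩ := ih _ h3
    refine A.exists_of_rc h1 _ ⟨Vis.sym (a, y) :: ts, (A.accFrom_cons _ _ _).2 ⟨(p, y), ⟨rfl, rfl, h2⟩, h4⟩, ?_⟩
    rw [← h5]
    rfl

theorem OCA.mem_Lobs (A : OCA Q α) (w) : w ∈ A.Lobs ↔ A.AccW (A.init, 0) w := by
  constructor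
  · rintro ⟨ts, h, rfl⟩
    exact A.accW_of ts _ h
  · intro h
    exact A.exists_of_accW w _ h

theorem OCA.sil_iff (A : OCA Q α) (q q' : Q) (x y : ℕ) : A.sil (q, x) (q', y) ↔
    (y = x + 1 ∧ (q, min x A.m, Vis.inc, q') ∈ A.Δ) ∨
    (1 ≤ x ∧ y = x - 1 ∧ (q, min x A.m, Vis.dec, q') ∈ A.Δ) := Iff.rfl

theorem OCA.sil_near (A : OCA Q α) {c c' : Q × ℕ} (h : A.sil c c') :
    c'.2 ≤ c.2 + 1 ∧ c.2 ≤ c'.2 + 1 := by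
  obtain ⟨q, x⟩ := c
  obtain ⟨q', y⟩ := c'
  rw [A.sil_iff] at h
  simp only
  omega

theorem OCA.sil_shift (A : OCA Q α) {q q' : Q} {x x' k l : ℕ} (hx : A.m ≤ x) (hx' : A.m ≤ x')
    (h : A.sil (q, x + k) (q', x + l)) : A.sil (q, x' + k) (q', x' + l) := by
  rw [A.sil_iff] at h ⊢
  rw [min_eq_right (by omega)] at h ⊢
  rcases h with ⟨h1, h2⟩ | ⟨h1, h2, h3⟩
  · exact Or.inl ⟨by omega, h2⟩
  · exact Or.inr ⟨by omega, by omega, h3⟩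

theorem OCA.rc_shift1 (A : OCA Q α) {x x' : ℕ} (hx : A.m ≤ x) (hx' : A.m ≤ x')
    (hB : ∀ q q', A.Rc (q, x) (q', x) → A.Rc (q, x') (q', x')) {q : Q} {c : Q × ℕ}
    (h : A.Rc (q, x) c) : ∀ l, c.2 = x + l → A.Rc (q, x') (c.1, x' + l) := by
  induction h with
  | refl =>
    intro l hl
    have : l = 0 := by simp at hl; omega
    subst this
    exact Relation.ReflTransGen.refl
  | @tail b c h1 h2 ih =>
    intro l hl
    obtain ⟨p, y⟩ := b
    obtain ⟨p', z⟩ := c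
    simp only at hl
    subst hl
    rcases Nat.eq_zero_or_pos l with rfl | hpos
    · exact hB _ _ (Relation.ReflTransGen.tail h1 h2)
    · have h3 := A.sil_near h2
      simp only at h3
      obtain ⟨j, rfl⟩ : ∃ j, y = x + j := ⟨y - x, by omega⟩
      exact Relation.ReflTransGen.tail (ih j rfl) (A.sil_shift hx hx' h2)

theorem OCA.rc_shift (A : OCA Q α) {x x' : ℕ} (hx : A.m ≤ x) (hx' : A.m ≤ x')
    (hB : ∀ q q', A.Rc (q, x) (q', x) → A.Rc (q, x') (q', x')) {q' : Q} {l : ℕ} {c : Q × ℕ}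
    (h : A.Rc c (q', x + l)) : ∀ k, c.2 = x + k → A.Rc (c.1, x' + k) (q', x' + l) := by
  induction h using Relation.ReflTransGen.head_induction_on with
  | refl =>
    intro k hk
    have : k = l := by simp at hk; omega
    subst this
    exact Relation.ReflTransGen.refl
  | @head c b h1 h2 ih =>
    intro k hk
    obtain ⟨p, y⟩ := b
    obtain ⟨p', z⟩ := c
    simp only at hk
    subst hk
    rcases Nat.eq_zero_or_pos k with rfl | hpos
    · exact A.rc_shift1 hx hx' hB (Relation.ReflTransGen.head h1 h2) l rfl
    · have h3 := A.sil_near h1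
      simp only at h3
      obtain ⟨j, rfl⟩ : ∃ j, y = x + j := ⟨y - x, by omega⟩
      exact Relation.ReflTransGen.head (A.sil_shift hx hx' h1) (ih j rfl)

theorem OCA.accF_shift (A : OCA Q α) {x x' : ℕ} (hx : A.m ≤ x) (hx' : A.m ≤ x')
    (hF : ∀ q, A.AccF (q, x) → A.AccF (q, x')) {c c' : Q × ℕ}
    (h : A.Rc c c') (hc' : c'.1 ∈ A.final) : ∀ k, c.2 = x + k → A.AccF (c.1, x' + k) := by
  induction h using Relation.ReflTransGen.head_induction_on with
  | refl =>
    intro k hk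
    exact ⟨_, Relation.ReflTransGen.refl, hc'⟩
  | @head c b h1 h2 ih =>
    intro k hk
    obtain ⟨p, y⟩ := b
    obtain ⟨p', z⟩ := c
    simp only at hk
    subst hk
    rcases Nat.eq_zero_or_pos k with rfl | hpos
    · exact hF _ ⟨c', Relation.ReflTransGen.head h1 h2, hc'⟩
    · have h3 := A.sil_near h1
      simp only at h3
      obtain ⟨j, rfl⟩ : ∃ j, y = x + j := ⟨y - x, by omega⟩
      obtain ⟨e, h4, h5⟩ := ih j rfl
      exact ⟨e, Relation.ReflTransGen.head (A.sil_shift hx hx' h1) h4, h5⟩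

theorem OCA.periodic (A : OCA Q α) [Finite Q] : ∃ x d : ℕ, A.m ≤ x ∧ 1 ≤ d ∧
    (∀ k l q q', A.Rc (q, x + d + k) (q', x + d + l) ↔ A.Rc (q, x + k) (q', x + l)) ∧
    (∀ k q, A.AccF (q, x + d + k) ↔ A.AccF (q, x + k)) := by
  let φ : ℕ → Set (Q × Q) × Set Q := fun n =>
    ({p | A.Rc (p.1, A.m + n) (p.2, A.m + n)}, {q | A.AccF (q, A.m + n)})
  have main : ∀ i j, φ i = φ j →
    (∀ k l q q', A.Rc (q, A.m + i + k) (q', A.m + i + l) → A.Rc (q, A.m + j + k) (q', A.m + j + l)) ∧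
    (∀ k q, A.AccF (q, A.m + i + k) → A.AccF (q, A.m + j + k)) := by
    intro i j h
    have h1 := congrArg Prod.fst h
    have h2 := congrArg Prod.snd h
    have hB : ∀ q q', A.Rc (q, A.m + i) (q', A.m + i) → A.Rc (q, A.m + j) (q', A.m + j) := by
      intro q q' h
      exact (Set.ext_iff.1 h1 (q, q')).1 h
    have hF : ∀ q, A.AccF (q, A.m + i) → A.AccF (q, A.m + j) := by
      intro q h
      exact (Set.ext_iff.1 h2 q).1 h
    constructor
    · intro k l q q' h
      exact A.rc_shift (by omega) (by omega) hB h k rfl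
    · rintro k q ⟨c', h, hc⟩
      exact A.accF_shift (by omega) (by omega) hF h hc k rfl
  obtain ⟨i, j, hij, h⟩ : ∃ i j, i < j ∧ φ i = φ j := by
    obtain ⟨i, j, hne, h⟩ := Finite.exists_ne_map_eq_of_infinite φ
    rcases lt_or_gt_of_ne hne with h1 | h1
    · exact ⟨i, j, h1, h⟩
    · exact ⟨j, i, h1, h.symm⟩
  refine ⟨A.m + i, j - i, by omega, by omega, ?_⟩
  have e : A.m + i + (j - i) = A.m + j := by omega
  rw [e]
  have a := main i j h
  have b := main j i h.symm
  exact ⟨fun k l q q' => ⟨b.1 k l q q', a.1 k l q q'⟩, fun k q => ⟨b.2 k q, a.2 k q⟩⟩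

theorem OCA.ivt_up (A : OCA Q α) {c : Q × ℕ} {q' : Q} {z y : ℕ} (h : A.Rc c (q', y))
    (h2 : z ≤ y) : c.2 ≤ z → ∃ p, A.Rc c (p, z) ∧ A.Rc (p, z) (q', y) := by
  induction h using Relation.ReflTransGen.head_induction_on with
  | refl =>
    intro h
    simp only at h
    obtain rfl : y = z := by omega
    exact ⟨q', Relation.ReflTransGen.refl, Relation.ReflTransGen.refl⟩
  | @head c b h1 h3 ih =>
    intro h
    rcases Nat.eq_or_lt_of_le h with h4 | h4
    · subst h4
      exact ⟨c.1, Relation.ReflTransGen.refl, Relation.ReflTransGen.head h1 h3⟩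
    · have := A.sil_near h1
      obtain ⟨p, h5, h6⟩ := ih (by omega)
      exact ⟨p, Relation.ReflTransGen.head h1 h5, h6⟩

theorem OCA.ivt_dn (A : OCA Q α) {c : Q × ℕ} {q' : Q} {z y : ℕ} (h : A.Rc c (q', y))
    (h2 : y ≤ z) : z ≤ c.2 → ∃ p, A.Rc c (p, z) ∧ A.Rc (p, z) (q', y) := by
  induction h using Relation.ReflTransGen.head_induction_on with
  | refl =>
    intro h
    simp only at h
    obtain rfl : y = z := by omega
    exact ⟨q', Relation.ReflTransGen.refl, Relation.ReflTransGen.refl⟩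
  | @head c b h1 h3 ih =>
    intro h
    rcases Nat.eq_or_lt_of_le h with h4 | h4
    · subst h4
      exact ⟨c.1, Relation.ReflTransGen.refl, Relation.ReflTransGen.head h1 h3⟩
    · have := A.sil_near h1
      obtain ⟨p, h5, h6⟩ := ih (by omega)
      exact ⟨p, Relation.ReflTransGen.head h1 h5, h6⟩

/-! ### Deterministic normal form -/

structure DP (S : Type) (α : Type) where
  s0 : S
  up : ℕ → S → S
  dn : ℕ → S → S
  lt : ℕ → α → S → S
  acc : ℕ → S → Prop
  t : ℕ
  d : ℕ
  hd : 1 ≤ d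
  per : ∀ x, t ≤ x → up (x + d) = up x ∧ dn (x + d) = dn x ∧ lt (x + d) = lt x ∧
    acc (x + d) = acc x

def DP.upN {S α : Type} (D : DP S α) (x : ℕ) : ℕ → S → S
  | 0, s => s
  | n + 1, s => D.up (x + n) (D.upN x n s)

def DP.dnN {S α : Type} (D : DP S α) (x : ℕ) : ℕ → S → S
  | 0, s => s
  | n + 1, s => D.dn (x - n) (D.dnN x n s)

def DP.move {S α : Type} (D : DP S α) (x y : ℕ) (s : S) : S :=
  D.dnN x (x - y) (D.upN x (y - x) s)

def DP.run {S α : Type} (D : DP S α) : ℕ → S → List (α × ℕ) → Prop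
  | x, s, [] => D.acc x s
  | x, s, (a, y) :: w => D.run y (D.lt y a (D.move x y s)) w

def DPClass (α : Type) : Set (Set (List (α × ℕ))) :=
  {L | ∃ (S : Type) (_ : Finite S) (D : DP S α), {w | D.run 0 D.s0 w} = L}

theorem DP.move_self {S α : Type} (D : DP S α) (x : ℕ) (s : S) : D.move x x s = s := by
  simp [DP.move, DP.upN, DP.dnN]

theorem DP.move_up {S α : Type} (D : DP S α) (x y : ℕ) (s : S) (h : x ≤ y) :
    D.move x (y + 1) s = D.up y (D.move x y s) := by
  have h1 : x - (y + 1) = 0 := by omega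
  have h2 : x - y = 0 := by omega
  have h3 : y + 1 - x = (y - x) + 1 := by omega
  simp only [DP.move, h1, h2, h3, DP.upN, DP.dnN]
  congr 1
  omega

theorem DP.move_dn {S α : Type} (D : DP S α) (x y : ℕ) (s : S) (h : y + 1 ≤ x) :
    D.move x y s = D.dn (y + 1) (D.move x (y + 1) s) := by
  have h1 : y - x = 0 := by omega
  have h2 : y + 1 - x = 0 := by omega
  have h3 : x - y = (x - (y + 1)) + 1 := by omega
  simp only [DP.move, h1, h2, h3, DP.upN, DP.dnN]
  congr 1
  omega

theorem DP.per_mul {S α : Type} (D : DP S α) (n : ℕ) : ∀ x, D.t ≤ x →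
    D.up (x + D.d * n) = D.up x ∧ D.dn (x + D.d * n) = D.dn x ∧ D.lt (x + D.d * n) = D.lt x ∧
    D.acc (x + D.d * n) = D.acc x := by
  induction n with
  | zero => intro x hx; simp
  | succ n ih =>
    intro x hx
    have h1 := D.per (x + D.d * n) (by omega)
    have h2 := ih x hx
    have e : x + D.d * (n + 1) = x + D.d * n + D.d := by ring
    rw [e, h1.1, h1.2.1, h1.2.2.1, h1.2.2.2]
    exact h2

theorem DP.per_eq {S α : Type} (D : DP S α) (x y : ℕ) (h : min x D.t = min y D.t)
    (h2 : (x : ZMod D.d) = y) :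
    D.up x = D.up y ∧ D.dn x = D.dn y ∧ D.lt x = D.lt y ∧ D.acc x = D.acc y := by
  wlog hxy : x ≤ y generalizing x y
  · have := this y x h.symm h2.symm (by omega)
    exact ⟨this.1.symm, this.2.1.symm, this.2.2.1.symm, this.2.2.2.symm⟩
  rcases lt_or_ge x D.t with h3 | h3
  · obtain rfl : x = y := by omega
    simp
  · rw [ZMod.natCast_eq_natCast_iff, Nat.modEq_iff_dvd' hxy] at h2
    obtain ⟨n, hn⟩ := h2
    have := D.per_mul n x h3
    rw [← hn, Nat.add_sub_cancel' hxy] at this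
    exact ⟨this.1.symm, this.2.1.symm, this.2.2.1.symm, this.2.2.2.symm⟩

theorem DPClass.compl {α : Type} {L} (h : L ∈ DPClass α) : Set.univ \ L ∈ DPClass α := by
  obtain ⟨S, hS, D, rfl⟩ := h
  let E : DP S α := { D with
    acc := fun x s => ¬ D.acc x s
    per := fun x hx => by
      have := D.per x hx
      exact ⟨this.1, this.2.1, this.2.2.1, by rw [this.2.2.2]⟩ }
  have hu : ∀ x n s, E.upN x n s = D.upN x n s := by
    intro x n s
    induction n with
    | zero => rfl
    | succ n ih => simp only [DP.upN, ih]; rfl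
  have hdn : ∀ x n s, E.dnN x n s = D.dnN x n s := by
    intro x n s
    induction n with
    | zero => rfl
    | succ n ih => simp only [DP.dnN, ih]; rfl
  have key : ∀ w x s, E.run x s w ↔ ¬ D.run x s w := by
    intro w
    induction w with
    | nil => intro x s; exact Iff.rfl
    | cons b w ih =>
      intro x s
      obtain ⟨a, y⟩ := b
      simp only [DP.run, ih, DP.move, hu, hdn]
      rfl
  refine ⟨S, hS, E, ?_⟩
  ext w
  simp only [Set.mem_ofPred_eq, key, Set.mem_sdiff, Set.mem_univ, true_and]
  rfl

theorem DPClass.inter {α : Type} {L1 L2} (h1 : L1 ∈ DPClass α) (h2 : L2 ∈ DPClass α) :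
    L1 ∩ L2 ∈ DPClass α := by
  obtain ⟨S1, hS1, D1, rfl⟩ := h1
  obtain ⟨S2, hS2, D2, rfl⟩ := h2
  let E : DP (S1 × S2) α :=
    { s0 := (D1.s0, D2.s0)
      up := fun x s => (D1.up x s.1, D2.up x s.2)
      dn := fun x s => (D1.dn x s.1, D2.dn x s.2)
      lt := fun x a s => (D1.lt x a s.1, D2.lt x a s.2)
      acc := fun x s => D1.acc x s.1 ∧ D2.acc x s.2
      t := max D1.t D2.t
      d := D1.d * D2.d
      hd := Nat.mul_pos D1.hd D2.hd
      per := fun x hx => by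
        have a := D1.per_mul D2.d x (by omega)
        have b := D2.per_mul D1.d x (by omega)
        rw [mul_comm] at b
        rw [a.1, a.2.1, a.2.2.1, a.2.2.2, b.1, b.2.1, b.2.2.1, b.2.2.2]
        simp }
  have hu : ∀ x n s, E.upN x n s = (D1.upN x n s.1, D2.upN x n s.2) := by
    intro x n s
    induction n with
    | zero => rfl
    | succ n ih => simp only [DP.upN, ih]; rfl
  have hdn : ∀ x n s, E.dnN x n s = (D1.dnN x n s.1, D2.dnN x n s.2) := by
    intro x n s
    induction n with
    | zero => rfl
    | succ n ih => simp only [DP.dnN, ih]; rfl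
  have key : ∀ w x s, E.run x s w ↔ D1.run x s.1 w ∧ D2.run x s.2 w := by
    intro w
    induction w with
    | nil => intro x s; exact Iff.rfl
    | cons b w ih =>
      intro x s
      obtain ⟨a, y⟩ := b
      simp only [DP.run, ih, DP.move, hu, hdn]
      rfl
  refine ⟨S1 × S2, inferInstance, E, ?_⟩
  ext w
  simp only [Set.mem_ofPred_eq, key, Set.mem_inter_iff]
  rfl

/-! ### From OCAs to the normal form -/

theorem DPClass.of_obs {α : Type} {L} (h : L ∈ ObsClass α) : L ∈ DPClass α := by
  obtain ⟨Q, hQ, A, rfl⟩ := h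
  obtain ⟨x0, d, hx0, hd, hR, hF⟩ := A.periodic
  let D : DP (Set Q) α :=
    { s0 := {q | A.Rc (A.init, 0) (q, 0)}
      up := fun x s => {q' | ∃ q ∈ s, A.Rc (q, x) (q', x + 1)}
      dn := fun x s => {q' | ∃ q ∈ s, A.Rc (q, x) (q', x - 1)}
      lt := fun x a s => {q' | ∃ q ∈ s, ∃ p, (q, min x A.m, Vis.sym a, p) ∈ A.Δ ∧
        A.Rc (p, x) (q', x)}
      acc := fun x s => ∃ q ∈ s, A.AccF (q, x)
      t := x0 + 1
      d := d
      hd := hd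
      per := fun x hx => by
        obtain ⟨k, rfl⟩ : ∃ k, x = x0 + (k + 1) := ⟨x - x0 - 1, by omega⟩
        have e : x0 + (k + 1) + d = x0 + d + (k + 1) := by omega
        rw [e]
        refine ⟨?_, ?_, ?_, ?_⟩
        · funext s
          ext q'
          have := fun q => hR (k + 1) (k + 1 + 1) q q'
          simp only [← add_assoc] at this ⊢
          simp only [Set.mem_ofPred_eq, this]
        · funext s
          ext q'
          have := fun q => hR (k + 1) k q q'
          simp only [← add_assoc, Nat.add_sub_cancel] at this ⊢
          simp only [Set.mem_ofPred_eq, this]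
        · funext a s
          ext q'
          have h1 : min (x0 + d + (k + 1)) A.m = A.m := by omega
          have h2 : min (x0 + (k + 1)) A.m = A.m := by omega
          simp only [Set.mem_ofPred_eq, hR, h1, h2]
        · funext s
          simp only [hF] }
  have mv : ∀ x s, (∀ q ∈ s, ∀ q', A.Rc (q, x) (q', x) → q' ∈ s) → ∀ y,
      D.move x y s = {q' | ∃ q ∈ s, A.Rc (q, x) (q', y)} := by
    intro x s hs
    have base : D.move x x s = {q' | ∃ q ∈ s, A.Rc (q, x) (q', x)} := by
      rw [DP.move_self]
      ext q
      exact ⟨fun h => ⟨q, h, Relation.ReflTransGen.refl⟩, fun ⟨q1, h1, h2⟩ => hs q1 h1 q h2⟩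
    have hup : ∀ n, D.move x (x + n) s = {q' | ∃ q ∈ s, A.Rc (q, x) (q', x + n)} := by
      intro n
      induction n with
      | zero => exact base
      | succ n ih =>
        rw [← add_assoc, D.move_up x (x + n) s (by omega), ih]
        ext q'
        constructor
        · rintro ⟨p, ⟨q, h1, h2⟩, h3⟩
          exact ⟨q, h1, Relation.ReflTransGen.trans h2 h3⟩
        · rintro ⟨q, h1, h2⟩
          obtain ⟨p, h3, h4⟩ := A.ivt_up (z := x + n) h2 (by omega) (by simp)
          exact ⟨p, ⟨q, h1, h3⟩, h4⟩
    have hdn : ∀ n y, y + n = x → D.move x y s = {q' | ∃ q ∈ s, A.Rc (q, x) (q', y)} := by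
      intro n
      induction n with
      | zero =>
        intro y hy
        obtain rfl : y = x := hy
        exact base
      | succ n ih =>
        intro y hy
        rw [D.move_dn x y s (by omega), ih (y + 1) (by omega)]
        ext q'
        constructor
        · rintro ⟨p, ⟨q, h1, h2⟩, h3⟩
          exact ⟨q, h1, Relation.ReflTransGen.trans h2 h3⟩
        · rintro ⟨q, h1, h2⟩
          obtain ⟨p, h3, h4⟩ := A.ivt_dn (z := y + 1) h2 (by omega) (by simp only; omega)
          exact ⟨p, ⟨q, h1, h3⟩, h4⟩
    intro y
    rcases le_total x y with h | h
    · obtain ⟨n, rfl⟩ := Nat.exists_eq_add_of_le h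
      exact hup n
    · exact hdn (x - y) y (by omega)
  have key : ∀ w x s, (∀ q ∈ s, ∀ q', A.Rc (q, x) (q', x) → q' ∈ s) →
      (D.run x s w ↔ ∃ q ∈ s, A.AccW (q, x) w) := by
    intro w
    induction w with
    | nil => intro x s _; exact Iff.rfl
    | cons b w ih =>
      intro x s hs
      obtain ⟨a, y⟩ := b
      simp only [DP.run]
      rw [mv x s hs y, ih]
      · constructor
        · rintro ⟨q3, ⟨q2, ⟨q, h1, h2⟩, p, h3, h4⟩, h5⟩
          refine ⟨q, h1, q2, p, h2, h3, ?_⟩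
          clear ih mv
          have : ∀ c c', A.Rc c c' → A.AccW c' w → A.AccW c w := by
            intro c c' h hw
            induction h using Relation.ReflTransGen.head_induction_on with
            | refl => exact hw
            | head h1 _ ih => exact A.accW_head h1 _ ih
          exact this _ _ h4 h5
        · rintro ⟨q, h1, q2, p, h2, h3, h4⟩
          exact ⟨p, ⟨q2, ⟨q, h1, h2⟩, p, h3, Relation.ReflTransGen.refl⟩, h4⟩
      · rintro q ⟨q2, h1, p, h2, h3⟩ q' h4
        exact ⟨q2, h1, p, h2, Relation.ReflTransGen.trans h3 h4⟩
  refine ⟨Set Q, inferInstance, D, ?_⟩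
  ext w
  rw [A.mem_Lobs, Set.mem_ofPred_eq, key]
  · constructor
    · rintro ⟨q, h1, h2⟩
      have : ∀ c c', A.Rc c c' → A.AccW c' w → A.AccW c w := by
        intro c c' h hw
        induction h using Relation.ReflTransGen.head_induction_on with
        | refl => exact hw
        | head h1 _ ih => exact A.accW_head h1 _ ih
      exact this _ _ h1 h2
    · intro h
      exact ⟨A.init, Relation.ReflTransGen.refl, h⟩
  · intro q h1 q' h2
    exact Relation.ReflTransGen.trans h1 h2

/-! ### From the normal form to OCAs -/

def DP.trans {S α : Type} (D : DP S α) (x : ℕ) (s : S) (md : Prop ⊕ Bool) :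
    Vis α → S × ZMod D.d × (Prop ⊕ Bool) → Prop
  | Vis.inc, e => md ≠ Sum.inr false ∧ e = (D.up x s, (x : ZMod D.d) + 1, Sum.inr true)
  | Vis.dec, e => md ≠ Sum.inr true ∧ e = (D.dn x s, (x : ZMod D.d) - 1, Sum.inr false)
  | Vis.sym a, e => e = (D.lt x a s, (x : ZMod D.d), Sum.inl (D.acc x (D.lt x a s)))

def DP.toOCA {S α : Type} (D : DP S α) : OCA (S × ZMod D.d × (Prop ⊕ Bool)) α where
  init := (D.s0, 0, Sum.inl (D.acc 0 D.s0))
  final := {e | e.2.2 = Sum.inl True}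
  m := D.t
  Δ := {τ | ∃ x : ℕ, τ.2.1 = min x D.t ∧ τ.1.2.1 = (x : ZMod D.d) ∧
    D.trans x τ.1.1 τ.1.2.2 τ.2.2.1 τ.2.2.2}
  valid := by
    rintro τ ⟨x, h, _⟩
    rw [h]
    exact min_le_right _ _

theorem DP.mem_Δ {S α : Type} (D : DP S α) (s : S) (x : ℕ) (md) (σ : Vis α) (e) :
    ((s, (x : ZMod D.d), md), min x D.t, σ, e) ∈ D.toOCA.Δ ↔ D.trans x s md σ e := by
  constructor
  · rintro ⟨y, h1, h2, h3⟩
    simp only at h1 h2 h3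
    obtain ⟨ha, hb, hc, hd⟩ := D.per_eq x y h1 h2
    cases σ <;> simp only [DP.trans, ha, hb, hc, hd, h2] at h3 ⊢ <;> exact h3
  · intro h
    exact ⟨x, rfl, rfl, h⟩

def DP.Inv {S α : Type} (D : DP S α) (x : ℕ) (s : S) (b : Prop)
    (c : (S × ZMod D.d × (Prop ⊕ Bool)) × ℕ) : Prop :=
  c.1.1 = D.move x c.2 s ∧ c.1.2.1 = (c.2 : ZMod D.d) ∧
    ((c.1.2.2 = Sum.inl b ∧ c.2 = x) ∨ (c.1.2.2 = Sum.inr true ∧ x < c.2) ∨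
      (c.1.2.2 = Sum.inr false ∧ c.2 < x))

theorem DP.inv_of {S α : Type} (D : DP S α) (x : ℕ) (s : S) (b : Prop)
    (c : (S × ZMod D.d × (Prop ⊕ Bool)) × ℕ)
    (h : D.toOCA.Rc ((s, (x : ZMod D.d), Sum.inl b), x) c) : D.Inv x s b c := by
  induction h with
  | refl => exact ⟨(D.move_self x s).symm, rfl, Or.inl ⟨rfl, rfl⟩⟩
  | @tail c e h1 h2 ih =>
    obtain ⟨⟨s1, r1, m1⟩, y⟩ := c
    obtain ⟨⟨s2, r2, m2⟩, z⟩ := e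
    obtain ⟨i1, i2, i3⟩ := ih
    simp only at i1 i2 i3
    subst i2
    rw [OCA.sil_iff] at h2
    change (_ ∧ (_, min y D.t, _) ∈ _) ∨ (_ ∧ _ ∧ (_, min y D.t, _) ∈ _) at h2
    rw [D.mem_Δ, D.mem_Δ] at h2
    rcases h2 with ⟨rfl, hm, he⟩ | ⟨hy, rfl, hm, he⟩
    · simp only [Prod.mk.injEq] at he
      obtain ⟨rfl, rfl, rfl⟩ := he
      have hxy : x ≤ y := by
        rcases i3 with ⟨_, h⟩ | ⟨_, h⟩ | ⟨h, _⟩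
        · omega
        · omega
        · exact absurd h hm
      refine ⟨?_, by simp, Or.inr (Or.inl ⟨rfl, ?_⟩)⟩
      · simp only
        rw [D.move_up x y s hxy, i1]
      · simp only
        omega
    · simp only [Prod.mk.injEq] at he
      obtain ⟨rfl, rfl, rfl⟩ := he
      have hxy : y ≤ x := by
        rcases i3 with ⟨_, h⟩ | ⟨h, _⟩ | ⟨_, h⟩
        · omega
        · exact absurd h hm
        · omega
      obtain ⟨y, rfl⟩ : ∃ k, y = k + 1 := ⟨y - 1, by omega⟩
      refine ⟨?_, by simp, Or.inr (Or.inr ⟨rfl, ?_⟩)⟩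
      · simp only [Nat.add_sub_cancel]
        rw [D.move_dn x y s hxy, i1]
      · simp only
        omega

theorem DP.reach {S α : Type} (D : DP S α) (x : ℕ) (s : S) (b : Prop) (y : ℕ) :
    ∃ md, D.toOCA.Rc ((s, (x : ZMod D.d), Sum.inl b), x)
      ((D.move x y s, (y : ZMod D.d), md), y) := by
  have hup : ∀ n, ∃ md, md ≠ Sum.inr false ∧ D.toOCA.Rc ((s, (x : ZMod D.d), Sum.inl b), x)
      ((D.move x (x + n) s, ((x + n : ℕ) : ZMod D.d), md), x + n) := by
    intro n
    induction n with
    | zero =>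
      refine ⟨Sum.inl b, by simp, ?_⟩
      rw [add_zero, D.move_self]
      exact Relation.ReflTransGen.refl
    | succ n ih =>
      obtain ⟨md, h1, h2⟩ := ih
      refine ⟨Sum.inr true, by simp, Relation.ReflTransGen.tail h2 (Or.inl ⟨rfl, ?_⟩)⟩
      refine (D.mem_Δ _ _ _ _ _).2 ⟨h1, ?_⟩
      rw [← add_assoc, D.move_up x (x + n) s (by omega)]
      push_cast
      rfl
  have hdn : ∀ n y, y + n = x → ∃ md, md ≠ Sum.inr true ∧
      D.toOCA.Rc ((s, (x : ZMod D.d), Sum.inl b), x)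
      ((D.move x y s, (y : ZMod D.d), md), y) := by
    intro n
    induction n with
    | zero =>
      intro y hy
      obtain rfl : y = x := hy
      refine ⟨Sum.inl b, by simp, ?_⟩
      rw [D.move_self]
      exact Relation.ReflTransGen.refl
    | succ n ih =>
      intro y hy
      obtain ⟨md, h1, h2⟩ := ih (y + 1) (by omega)
      refine ⟨Sum.inr false, by simp,
        Relation.ReflTransGen.tail h2 (Or.inr ⟨by omega, by omega, ?_⟩)⟩
      refine (D.mem_Δ _ _ _ _ _).2 ⟨h1, ?_⟩
      rw [D.move_dn x y s (by omega)]
      simp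
  rcases le_total x y with h | h
  · obtain ⟨n, rfl⟩ := Nat.exists_eq_add_of_le h
    obtain ⟨md, _, h2⟩ := hup n
    exact ⟨md, h2⟩
  · obtain ⟨md, _, h2⟩ := hdn (x - y) y (by omega)
    exact ⟨md, h2⟩

theorem DP.accW_iff {S α : Type} (D : DP S α) (w : List (α × ℕ)) : ∀ (x : ℕ) (s : S),
    D.toOCA.AccW ((s, (x : ZMod D.d), Sum.inl (D.acc x s)), x) w ↔ D.run x s w := by
  induction w with
  | nil =>
    intro x s
    constructor
    · rintro ⟨c, h1, h2⟩
      have h3 : c.1.2.2 = Sum.inl True := h2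
      obtain ⟨_, _, i3⟩ := D.inv_of _ _ _ _ h1
      rw [h3] at i3
      simp only [Sum.inl.injEq, reduceCtorEq, false_and, or_false] at i3
      exact of_eq_true i3.1.symm
    · intro h
      refine ⟨_, Relation.ReflTransGen.refl, ?_⟩
      change Sum.inl (D.acc x s) = Sum.inl True
      rw [eq_true (show D.acc x s from h)]
  | cons b w ih =>
    intro x s
    obtain ⟨a, y⟩ := b
    constructor
    · rintro ⟨⟨s1, r1, m1⟩, p, h1, h2, h3⟩
      obtain ⟨i1, i2, _⟩ := D.inv_of _ _ _ _ h1
      simp only at i1 i2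
      subst i1 i2
      have h4 := (D.mem_Δ _ _ _ _ _).1 h2
      simp only [DP.trans] at h4
      subst h4
      exact (ih _ _).1 h3
    · intro h
      obtain ⟨md, h1⟩ := D.reach x s (D.acc x s) y
      exact ⟨_, _, h1, (D.mem_Δ _ _ _ _ _).2 rfl, (ih _ _).2 h⟩

theorem DPClass.to_obs {α : Type} {L} (h : L ∈ DPClass α) : L ∈ ObsClass α := by
  obtain ⟨S, hS, D, rfl⟩ := h
  haveI : NeZero D.d := ⟨by have := D.hd; omega⟩
  refine ⟨_, Fintype.ofFinite _, D.toOCA, ?_⟩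
  ext w
  rw [OCA.mem_Lobs, Set.mem_ofPred_eq, ← D.accW_iff]
  simp [DP.toOCA]

/-- the class of observability languages of OCAs is closed under
complement (relative to `(α × ℕ)*`), binary intersection and binary union. -/
theorem stmt16 {α : Type} [Fintype α] [Nonempty α] :
    (∀ L ∈ ObsClass α, Set.univ \ L ∈ ObsClass α) ∧
    (∀ L1 ∈ ObsClass α, ∀ L2 ∈ ObsClass α, L1 ∩ L2 ∈ ObsClass α) ∧
    (∀ L1 ∈ ObsClass α, ∀ L2 ∈ ObsClass α, L1 ∪ L2 ∈ ObsClass α) := by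
  have hc : ∀ L ∈ ObsClass α, Set.univ \ L ∈ ObsClass α :=
    fun L h => DPClass.to_obs (DPClass.compl (DPClass.of_obs h))
  have hi : ∀ L1 ∈ ObsClass α, ∀ L2 ∈ ObsClass α, L1 ∩ L2 ∈ ObsClass α :=
    fun L1 h1 L2 h2 => DPClass.to_obs (DPClass.inter (DPClass.of_obs h1) (DPClass.of_obs h2))
  refine ⟨hc, hi, fun L1 h1 L2 h2 => ?_⟩
  have h := hc _ (hi _ (hc _ h1) _ (hc _ h2))
  have e : L1 ∪ L2 = Set.univ \ ((Set.univ \ L1) ∩ (Set.univ \ L2)) := by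
    ext w
    simp only [Set.mem_union, Set.mem_sdiff, Set.mem_inter_iff, Set.mem_univ, true_and]
    tauto
  rw [e]
  exact h
end

section
/- For all c1, c2 ∈ ℕ and all d1, d2 ≥ 1, there exists a c1-OCA C over a two-letter alphabet {b1, b2} such that L_vis(C) = {inc^{x+y} b1 dec^{y} b2 : x ∈ {c1 + d1·k : k ∈ ℕ} and y ∈ {c2 + d2·k : k ∈ ℕ}}. -/
variable {Q α : Type*}

/-- Acceptance of a visible word from a configuration. -/
def OCAcc {Q α : Type*} (A : OCA Q α) : Q × ℕ → List (Vis α) → Prop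
  | c, [] => c.1 ∈ A.final
  | c, Vis.inc :: w => ∃ q', (c.1, min c.2 A.m, Vis.inc, q') ∈ A.Δ ∧ OCAcc A (q', c.2 + 1) w
  | c, Vis.dec :: w => 1 ≤ c.2 ∧ ∃ q', (c.1, min c.2 A.m, Vis.dec, q') ∈ A.Δ ∧
      OCAcc A (q', c.2 - 1) w
  | c, Vis.sym a :: w => ∃ q', (c.1, min c.2 A.m, Vis.sym a, q') ∈ A.Δ ∧ OCAcc A (q', c.2) w

theorem runFrom_last_ne {Q α : Type*} (A : OCA Q α) {c ts cs} (h : A.RunFrom c ts cs) :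
    cs ≠ [] := by
  cases h <;> simp

theorem ocacc_of_run {Q α : Type*} (A : OCA Q α) {c ts cs} (h : A.RunFrom c ts cs) :
    ∀ e, cs.getLast? = some e → e.1 ∈ A.final → OCAcc A c (visMap ts) := by
  induction h with
  | nil c => intro e he hf; simp at he; subst he; exact hf
  | @cons c c' τ ts cs hs hr ih =>
    intro e he hf
    have hne := runFrom_last_ne A hr
    rw [List.getLast?_cons_of_ne_nil hne] at he
    have ih' := ih e he hf
    obtain ⟨q, x⟩ := c
    obtain ⟨q', x'⟩ := c'
    rcases τ with ⟨a, y⟩ | _ | _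
    · obtain ⟨h1, h2, h3⟩ := hs
      subst h2
      exact ⟨q', h3, ih'⟩
    · obtain ⟨h2, h3⟩ := hs
      subst h2
      exact ⟨q', h3, ih'⟩
    · obtain ⟨h1, h2, h3⟩ := hs
      subst h2
      exact ⟨h1, q', h3, ih'⟩

theorem run_of_ocacc {Q α : Type*} (A : OCA Q α) (w : List (Vis α)) : ∀ c, OCAcc A c w →
    ∃ ts cs e, A.RunFrom c ts cs ∧ cs.getLast? = some e ∧ e.1 ∈ A.final ∧ visMap ts = w := by
  induction w with
  | nil => intro c h; exact ⟨[], [c], c, .nil c, by simp, h, rfl⟩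
  | cons σ w ih =>
    rintro ⟨q, x⟩ h
    rcases σ with a | _ | _
    · obtain ⟨q', h1, h2⟩ := h
      obtain ⟨ts, cs, e, hr, hl, hf, hv⟩ := ih _ h2
      refine ⟨Vis.sym (a, x) :: ts, (q, x) :: cs, e, .cons (c' := (q', x)) ⟨rfl, rfl, h1⟩ hr, ?_, hf, ?_⟩
      · rw [List.getLast?_cons_of_ne_nil (runFrom_last_ne A hr), hl]
      · rw [← hv]; rfl
    · obtain ⟨q', h1, h2⟩ := h
      obtain ⟨ts, cs, e, hr, hl, hf, hv⟩ := ih _ h2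
      refine ⟨Vis.inc :: ts, (q, x) :: cs, e, .cons (c' := (q', x + 1)) ⟨rfl, h1⟩ hr, ?_, hf, ?_⟩
      · rw [List.getLast?_cons_of_ne_nil (runFrom_last_ne A hr), hl]
      · rw [← hv]; rfl
    · obtain ⟨h0, q', h1, h2⟩ := h
      obtain ⟨ts, cs, e, hr, hl, hf, hv⟩ := ih _ h2
      refine ⟨Vis.dec :: ts, (q, x) :: cs, e, .cons (c' := (q', x - 1)) ⟨h0, rfl, h1⟩ hr, ?_, hf, ?_⟩
      · rw [List.getLast?_cons_of_ne_nil (runFrom_last_ne A hr), hl]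
      · rw [← hv]; rfl

theorem mem_Lvis_iff {Q α : Type*} (A : OCA Q α) (w : List (Vis α)) :
    w ∈ A.Lvis ↔ OCAcc A (A.init, 0) w := by
  constructor
  · rintro ⟨ts, ⟨cs, e, hr, hl, hf⟩, rfl⟩
    exact ocacc_of_run A hr e hl hf
  · intro h
    obtain ⟨ts, cs, e, hr, hl, hf, hv⟩ := run_of_ocacc A w _ h
    exact ⟨ts, ⟨cs, e, hr, hl, hf⟩, hv⟩

abbrev QQ (c2 d1 d2 : ℕ) : Type := ZMod d1 ⊕ ((ZMod d1 × Fin (c2 + 1) × ZMod d2) ⊕ Unit)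

def capF (c2 y : ℕ) : Fin (c2 + 1) := ⟨min y c2, by omega⟩

def DD (c1 c2 d1 d2 : ℕ) : QQ c2 d1 d2 → ℕ → Vis Bool → QQ c2 d1 d2 → Prop
  | .inl a, _, Vis.inc, q' => q' = .inl (a + 1)
  | .inl a, _, Vis.sym true, q' => q' = .inr (.inl (a, capF c2 0, 0))
  | .inr (.inl (a, s, b)), _, Vis.dec, q' => q' = .inr (.inl (a - 1, capF c2 (s.val + 1), b + 1))
  | .inr (.inl (a, s, b)), k, Vis.sym false, q' =>
      k = c1 ∧ a = (c1 : ZMod d1) ∧ s.val = c2 ∧ b = (c2 : ZMod d2) ∧ q' = .inr (.inr ())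
  | _, _, _, _ => False

def CC (c1 c2 d1 d2 : ℕ) : OCA (QQ c2 d1 d2) Bool where
  init := .inl 0
  final := {.inr (.inr ())}
  m := c1
  Δ := {t | t.2.1 ≤ c1 ∧ DD c1 c2 d1 d2 t.1 t.2.1 t.2.2.1 t.2.2.2}
  valid := fun _ h => h.1

theorem acc3 (c1 c2 d1 d2 x : ℕ) (w) :
    OCAcc (CC c1 c2 d1 d2) (.inr (.inr ()), x) w ↔ w = [] := by
  rcases w with _ | ⟨(_ | _) | _ | _, w⟩ <;> simp [OCAcc, CC, DD]

theorem acc2 (c1 c2 d1 d2 : ℕ) (w) : ∀ x y0 : ℕ,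
    OCAcc (CC c1 c2 d1 d2) (.inr (.inl ((x : ZMod d1), capF c2 y0, (y0 : ZMod d2))), x) w ↔
    ∃ x' y, x = x' + y ∧ c1 ≤ x' ∧ (x' : ZMod d1) = c1 ∧ c2 ≤ y0 + y ∧
      ((y0 + y : ℕ) : ZMod d2) = c2 ∧ w = List.replicate y Vis.dec ++ [Vis.sym false] := by
  induction w with
  | nil => intro x y0; simp [OCAcc, CC]
  | cons σ w ih =>
    intro x y0
    rcases σ with (_ | _) | _ | _
    · have : OCAcc (CC c1 c2 d1 d2) (.inr (.inl ((x : ZMod d1), capF c2 y0, (y0 : ZMod d2))), x)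
          (Vis.sym false :: w) ↔ c1 ≤ x ∧ (x : ZMod d1) = c1 ∧ c2 ≤ y0 ∧ (y0 : ZMod d2) = c2 ∧ w = [] := by
        constructor
        · rintro ⟨q', ⟨_, h1, h2, h3, h4, h5⟩, h6⟩
          simp only at h1 h2 h3 h4 h5
          subst h5
          rw [acc3] at h6
          simp only [CC, capF] at h1 h3
          exact ⟨by omega, h2, by omega, h4, h6⟩
        · rintro ⟨h1, h2, h3, h4, rfl⟩
          refine ⟨.inr (.inr ()), ⟨by simp [CC], ?_, h2, ?_, h4, rfl⟩, (acc3 ..).2 rfl⟩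
          · simp [CC, h1]
          · simp [capF, h3]
      rw [this]
      constructor
      · rintro ⟨h1, h2, h3, h4, rfl⟩
        exact ⟨x, 0, rfl, h1, h2, h3, h4, rfl⟩
      · rintro ⟨x', y, rfl, h1, h2, h3, h4, h5⟩
        rcases y with _ | y
        · simp at h5; exact ⟨h1, h2, h3, h4, h5⟩
        · simp [List.replicate_succ] at h5
    · constructor
      · rintro ⟨q', ⟨_, h⟩, _⟩; exact h.elim
      · rintro ⟨x', y, _, _, _, _, _, h5⟩
        rcases y with _ | y <;> simp [List.replicate_succ] at h5
    · constructor
      · rintro ⟨q', ⟨_, h⟩, _⟩; exact h.elim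
      · rintro ⟨x', y, _, _, _, _, _, h5⟩
        rcases y with _ | y <;> simp [List.replicate_succ] at h5
    · have hcap : capF c2 ((capF c2 y0).val + 1) = capF c2 (y0 + 1) := by
        apply Fin.ext; simp only [capF]; omega
      rcases x with _ | x
      · constructor
        · rintro ⟨h, _⟩; simp at h
        · rintro ⟨x', y, h, _, _, _, _, h5⟩
          obtain rfl : y = 0 := by omega
          simp at h5
      · have key : OCAcc (CC c1 c2 d1 d2)
            (.inr (.inl (((x + 1 : ℕ) : ZMod d1), capF c2 y0, (y0 : ZMod d2))), x + 1)
            (Vis.dec :: w) ↔ OCAcc (CC c1 c2 d1 d2)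
            (.inr (.inl ((x : ZMod d1), capF c2 (y0 + 1), ((y0 + 1 : ℕ) : ZMod d2))), x) w := by
          have e : (((x + 1 : ℕ) : ZMod d1)) - 1 = x := by push_cast; ring
          constructor
          · rintro ⟨_, q', ⟨_, h⟩, h6⟩
            simp only [DD] at h
            rw [e, hcap] at h
            subst h
            simpa using h6
          · intro h
            refine ⟨by simp, _, ⟨by simp [CC], rfl⟩, ?_⟩
            simp only
            rw [e, hcap]
            simpa using h
        rw [key, ih]
        constructor
        · rintro ⟨x', y, rfl, h1, h2, h3, h4, rfl⟩
          refine ⟨x', y + 1, by omega, h1, h2, by omega, ?_, by simp [List.replicate_succ]⟩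
          rw [← h4]; congr 1; omega
        · rintro ⟨x', y, h, h1, h2, h3, h4, h5⟩
          rcases y with _ | y
          · simp at h5
          · simp [List.replicate_succ] at h5
            refine ⟨x', y, by omega, h1, h2, by omega, ?_, h5⟩
            rw [← h4]; congr 1; omega

theorem acc1 (c1 c2 d1 d2 : ℕ) (w) : ∀ n : ℕ,
    OCAcc (CC c1 c2 d1 d2) (.inl (n : ZMod d1), n) w ↔
    ∃ j x y, n + j = x + y ∧ c1 ≤ x ∧ (x : ZMod d1) = c1 ∧ c2 ≤ y ∧ (y : ZMod d2) = c2 ∧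
      w = List.replicate j Vis.inc ++ Vis.sym true ::
        (List.replicate y Vis.dec ++ [Vis.sym false]) := by
  induction w with
  | nil => intro n; simp [OCAcc, CC]
  | cons σ w ih =>
    intro n
    rcases σ with (_ | _) | _ | _
    · constructor
      · rintro ⟨q', ⟨_, h⟩, _⟩; exact h.elim
      · rintro ⟨j, x', y, _, _, _, _, _, h5⟩
        rcases j with _ | j <;> simp [List.replicate_succ] at h5
    · have key : OCAcc (CC c1 c2 d1 d2) (.inl (n : ZMod d1), n) (Vis.sym true :: w) ↔
          OCAcc (CC c1 c2 d1 d2) (.inr (.inl ((n : ZMod d1), capF c2 0, ((0 : ℕ) : ZMod d2))), n) w := by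
        rw [Nat.cast_zero]
        constructor
        · rintro ⟨q', ⟨_, h⟩, h6⟩
          simp only [DD] at h
          subst h
          exact h6
        · intro h
          exact ⟨_, ⟨by simp [CC], rfl⟩, h⟩
      rw [key, acc2]
      constructor
      · rintro ⟨x', y, h, h1, h2, h3, h4, rfl⟩
        rw [zero_add] at h3 h4
        exact ⟨0, x', y, h, h1, h2, h3, h4, rfl⟩
      · rintro ⟨j, x', y, h, h1, h2, h3, h4, h5⟩
        rcases j with _ | j
        · simp at h5
          exact ⟨x', y, h, h1, h2, by omega, by rw [zero_add]; exact h4, h5⟩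
        · simp [List.replicate_succ] at h5
    · have key : OCAcc (CC c1 c2 d1 d2) (.inl (n : ZMod d1), n) (Vis.inc :: w) ↔
          OCAcc (CC c1 c2 d1 d2) (.inl ((n + 1 : ℕ) : ZMod d1), n + 1) w := by
        rw [Nat.cast_add, Nat.cast_one]
        constructor
        · rintro ⟨q', ⟨_, h⟩, h6⟩
          simp only [DD] at h
          subst h
          exact h6
        · intro h
          exact ⟨_, ⟨by simp [CC], rfl⟩, h⟩
      rw [key, ih]
      constructor
      · rintro ⟨j, x', y, h, h1, h2, h3, h4, rfl⟩
        exact ⟨j + 1, x', y, by omega, h1, h2, h3, h4, by simp [List.replicate_succ]⟩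
      · rintro ⟨j, x', y, h, h1, h2, h3, h4, h5⟩
        rcases j with _ | j
        · simp at h5
        · simp [List.replicate_succ] at h5
          exact ⟨j, x', y, by omega, h1, h2, h3, h4, h5⟩
    · constructor
      · rintro ⟨_, q', ⟨_, h⟩, _⟩; exact h.elim
      · rintro ⟨j, x', y, _, _, _, _, _, h5⟩
        rcases j with _ | j <;> simp [List.replicate_succ] at h5

theorem prog_iff (c d x : ℕ) : (∃ k : ℕ, x = c + d * k) ↔ c ≤ x ∧ (x : ZMod d) = c := by
  constructor
  · rintro ⟨k, rfl⟩; simp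
  · rintro ⟨h1, h2⟩
    have h3 := (Nat.modEq_iff_dvd' h1).1 ((ZMod.natCast_eq_natCast_iff _ _ _).1 h2.symm)
    obtain ⟨k, hk⟩ := h3
    exact ⟨k, by omega⟩

/-- for arithmetic progressions `c1 + d1·ℕ` and `c2 + d2·ℕ`
(with `d1, d2 ≥ 1`), there is a `c1`-OCA over the two-letter alphabet `Bool`
(where `b1 := true` and `b2 := false`) whose visibly semantics is
`{inc^(x+y) b1 dec^y b2 : x ∈ c1 + d1·ℕ, y ∈ c2 + d2·ℕ}`. -/
theorem stmt17 (c1 c2 d1 d2 : ℕ) (hd1 : 1 ≤ d1) (hd2 : 1 ≤ d2) :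
    ∃ (Q : Type) (_ : Fintype Q) (C : OCA Q Bool),
      C.m = c1 ∧
      C.Lvis = {w | ∃ x y : ℕ,
        (∃ k : ℕ, x = c1 + d1 * k) ∧ (∃ k : ℕ, y = c2 + d2 * k) ∧
        w = List.replicate (x + y) Vis.inc ++ Vis.sym true ::
            (List.replicate y Vis.dec ++ [Vis.sym false])} := by
  haveI : NeZero d1 := ⟨by omega⟩
  haveI : NeZero d2 := ⟨by omega⟩
  refine ⟨QQ c2 d1 d2, inferInstance, CC c1 c2 d1 d2, rfl, ?_⟩
  ext w
  have h0 := acc1 c1 c2 d1 d2 w 0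
  rw [Nat.cast_zero] at h0
  rw [mem_Lvis_iff]
  refine h0.trans ?_
  simp only [Set.mem_setOf_eq, prog_iff]
  constructor
  · rintro ⟨j, x, y, h, h1, h2, h3, h4, h5⟩
    obtain rfl : j = x + y := by omega
    exact ⟨x, y, ⟨h1, h2⟩, ⟨h3, h4⟩, h5⟩
  · rintro ⟨x, y, ⟨h1, h2⟩, ⟨h3, h4⟩, h5⟩
    exact ⟨x + y, x, y, by omega, h1, h2, h3, h4, h5⟩
end

section
/- Let Γ = {□, b, c} be a three-letter alphabet and let L be a regular language over Γ (i.e., L is accepted by some deterministic finite automaton with finitely many states) such that L ⊆ {□^x b □^y c : x, y ∈ ℕ}. Then there exist n ∈ ℕ and natural numbers c1_j, d1_j, c2_j, d2_j for 1 ≤ j ≤ n such that L = ⋃_{j=1}^{n} {□^x b □^y c : x ∈ {c1_j + d1_j·k : k ∈ ℕ} and y ∈ {c2_j + d2_j·k : k ∈ ℕ}}. -/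
variable {Q α : Type*}

theorem aux_iter {S : Type} [Fintype S] (f : S → S) :
    ∃ (N : ℕ) (d : ℕ → ℕ), (∀ a k, f^[a + d a * k] = f^[a]) ∧
      ∀ x, ∃ a, a < N ∧ ∃ k, x = a + d a * k := by
  classical
  obtain ⟨i, j, hij, he⟩ : ∃ i j : ℕ, i < j ∧ f^[i] = f^[j] := by
    obtain ⟨i, j, hne, he⟩ := Finite.exists_ne_map_eq_of_infinite (fun n : ℕ => f^[n])
    rcases lt_or_gt_of_ne hne with h | h
    · exact ⟨i, j, h, he⟩
    · exact ⟨j, i, h, he.symm⟩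
  have hp : ∀ x, i ≤ x → f^[x + (j - i)] = f^[x] := by
    intro x hx
    have h1 : x + (j - i) = (x - i) + j := by omega
    have h2 : x = (x - i) + i := by omega
    rw [h1, Function.iterate_add, ← he, ← Function.iterate_add, ← h2]
  refine ⟨j, fun a => if a < i then 0 else j - i, ?_, ?_⟩
  · intro a k
    by_cases h : a < i
    · simp [h]
    · simp only [h, if_false]
      induction k with
      | zero => simp
      | succ k ih =>
        rw [Nat.mul_succ, ← Nat.add_assoc, hp _ (by omega), ih]
  · intro x
    by_cases h : x < i
    · exact ⟨x, by omega, 0, by simp⟩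
    · have hm := Nat.mod_lt (x - i) (show 0 < j - i by omega)
      have hd := Nat.mod_add_div (x - i) (j - i)
      refine ⟨i + (x - i) % (j - i), by omega, (x - i) / (j - i), ?_⟩
      beta_reduce
      rw [if_neg (by omega)]
      omega

theorem aux_eval {S : Type} (M : DFA (Fin 3) S) (s : S) (x : ℕ) :
    M.evalFrom s (List.replicate x 0) = (fun s => M.step s 0)^[x] s := by
  induction x generalizing s with
  | zero => rfl
  | succ n ih => rw [List.replicate_succ, DFA.evalFrom_cons, ih, Function.iterate_succ_apply]

/-- a regular language contained in `{□^x b □^y c : x,y ∈ ℕ}`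
(over the three-letter alphabet `Fin 3`, with `□ := 0`, `b := 1`, `c := 2`)
is a finite union of languages
`{□^x b □^y c : x ∈ c1_j + d1_j·ℕ, y ∈ c2_j + d2_j·ℕ}`. -/
theorem stmt18 (L : Language (Fin 3))
    (hreg : ∃ (S : Type) (_ : Fintype S) (M : DFA (Fin 3) S), M.accepts = L)
    (hL : ∀ w ∈ L, ∃ x y : ℕ,
        w = List.replicate x (0 : Fin 3) ++ [1] ++ List.replicate y 0 ++ [2]) :
    ∃ (n : ℕ) (c1 d1 c2 d2 : Fin n → ℕ),
      ∀ w : List (Fin 3),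
        w ∈ L ↔ ∃ j : Fin n, ∃ x y : ℕ,
          (∃ k : ℕ, x = c1 j + d1 j * k) ∧ (∃ k : ℕ, y = c2 j + d2 j * k) ∧
          w = List.replicate x (0 : Fin 3) ++ [1] ++ List.replicate y 0 ++ [2] := by
  classical
  obtain ⟨S, _, M, rfl⟩ := hreg
  obtain ⟨N, d, hd, hN⟩ := aux_iter (fun s => M.step s 0)
  let W : ℕ → ℕ → List (Fin 3) := fun x y =>
    List.replicate x (0 : Fin 3) ++ [1] ++ List.replicate y 0 ++ [2]
  have hW : ∀ a b k l, W (a + d a * k) (b + d b * l) ∈ M.accepts ↔ W a b ∈ M.accepts := by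
    intro a b k l
    simp only [W, DFA.mem_accepts, DFA.eval, DFA.evalFrom_of_append, aux_eval, hd]
  let T := {q : Fin N × Fin N // W q.1 q.2 ∈ M.accepts}
  let e : T ≃ Fin (Fintype.card T) := Fintype.equivFin T
  refine ⟨Fintype.card T, fun j => (e.symm j).1.1, fun j => d (e.symm j).1.1,
    fun j => (e.symm j).1.2, fun j => d (e.symm j).1.2, fun w => ⟨fun hw => ?_, ?_⟩⟩
  · obtain ⟨x, y, rfl⟩ := hL w hw
    obtain ⟨a, ha, k, hk⟩ := hN x
    obtain ⟨b, hb, l, hl⟩ := hN y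
    have hab : W a b ∈ M.accepts := by
      rw [← hW a b k l, ← hk, ← hl]
      exact hw
    refine ⟨e ⟨(⟨a, ha⟩, ⟨b, hb⟩), hab⟩, x, y, ⟨k, ?_⟩, ⟨l, ?_⟩, rfl⟩
    · simpa using hk
    · simpa using hl
  · rintro ⟨j, x, y, ⟨k, rfl⟩, ⟨l, rfl⟩, rfl⟩
    exact (hW _ _ k l).2 (e.symm j).2
end
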